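/- arXiv:1610.07719 — 8 statements merged into one kernel-verified Lean document; each statement's English description precedes it below -/
import Mathlib

section
/- Every binary t-frameproof code of length N with n codewords induces a t-cover-free family of n subsets of a 2N-element set: replacing each entry 0 of the code's N×n representation matrix by the column (1,0)ᵀ and each entry 1 by (0,1)ᵀ yields a 2N×n binary matrix that is the representation matrix of a CFF(2N;n,t). -/
/-- The descendant set of a set `D` of codewords: all words `x` such that in every
coordinate `i`, the symbol `x i` appears as the `i`-th symbol of some codeword of `D`. -/
def descSet {N q : ℕ} (D : Finset (Fin N → Fin q)) : Set (Fin N → Fin q) :=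
  {x | ∀ i : Fin N, ∃ c ∈ D, x i = c i}

/-- `C` is a `t`-frameproof code: for every `D ⊆ C` with `|D| ≤ t`, `desc(D) ∩ C = D`. -/
def IsFrameproof {N q : ℕ} (t : ℕ) (C : Finset (Fin N → Fin q)) : Prop :=
  ∀ D : Finset (Fin N → Fin q), D ⊆ C → D.card ≤ t →
    descSet D ∩ (C : Set (Fin N → Fin q)) = (D : Set (Fin N → Fin q))

/-- A family `F` of finite sets is `t`-cover-free: no member is contained in the union of
at most `t` other (distinct) members of the family. -/
def IsCoverFree {α : Type*} [DecidableEq α] (t : ℕ) (F : Finset (Finset α)) : Prop :=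
  ∀ A₀ ∈ F, ∀ T ⊆ F.erase A₀, T.card ≤ t → ¬ A₀ ⊆ T.sup id

theorem mem_descSet {N q : ℕ} {D : Finset (Fin N → Fin q)} {x : Fin N → Fin q} :
    x ∈ descSet D ↔ ∀ i, ∃ c ∈ D, x i = c i :=
  Iff.rfl

theorem subset_descSet {N q : ℕ} (D : Finset (Fin N → Fin q)) :
    (D : Set (Fin N → Fin q)) ⊆ descSet D :=
  fun c hc _ => ⟨c, hc, rfl⟩

theorem isFrameproof_iff_forall_notMem_descSet {N q t : ℕ} {C : Finset (Fin N → Fin q)} :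
    IsFrameproof t C ↔ ∀ c ∈ C, ∀ D ⊆ C.erase c, D.card ≤ t → c ∉ descSet D := by
  constructor
  · intro hC c hc D hD hcard hdesc
    obtain ⟨hDC, hcD⟩ := Finset.subset_erase.1 hD
    have hmem : c ∈ descSet D ∩ (C : Set (Fin N → Fin q)) := ⟨hdesc, hc⟩
    rw [hC D hDC hcard] at hmem
    exact hcD hmem
  · intro h D hDC hcard
    refine Set.Subset.antisymm ?_ (Set.subset_inter (subset_descSet D) (mod_cast hDC))
    rintro c ⟨hdesc, hc⟩
    by_contra hcD
    exact h c hc D (Finset.subset_erase.2 ⟨hDC, hcD⟩) hcard hdesc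

theorem isCoverFree_image_iff {α β : Type*} [DecidableEq α] [DecidableEq β] {t : ℕ}
    {f : β → Finset α} (hf : Function.Injective f) {C : Finset β} :
    IsCoverFree t (C.image f) ↔
      ∀ c ∈ C, ∀ D ⊆ C.erase c, D.card ≤ t → ¬ f c ⊆ D.sup f := by
  simp only [IsCoverFree, Finset.forall_mem_image, ← Finset.image_erase hf,
    Finset.subset_image_iff, forall_exists_index, and_imp, forall_apply_eq_imp_iff₂,
    Finset.card_image_of_injective _ hf, Finset.sup_image, Function.id_comp]

section FunctionGraph

variable {ι α : Type*} [Fintype ι] [DecidableEq ι] [DecidableEq α]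

/-- The graph `{(i, c i) : i}` of a function `c` as a finite set. For a word `c` over a finite
alphabet, its incidence vector is obtained from `c` by replacing every symbol with the
corresponding unit column; in the binary case, `0` with `(1,0)ᵀ` and `1` with `(0,1)ᵀ`. -/
def functionGraph (c : ι → α) : Finset (ι × α) :=
  Finset.univ.image fun i => (i, c i)

theorem mem_functionGraph {c : ι → α} {p : ι × α} : p ∈ functionGraph c ↔ c p.1 = p.2 := by
  simp [functionGraph, Prod.ext_iff]

theorem functionGraph_subset_iff {c : ι → α} {S : Finset (ι × α)} :
    functionGraph c ⊆ S ↔ ∀ i, (i, c i) ∈ S := by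
  simp [functionGraph, Finset.image_subset_iff]

theorem functionGraph_injective :
    Function.Injective (functionGraph : (ι → α) → Finset (ι × α)) := by
  intro c d h
  funext i
  exact (mem_functionGraph.1 (functionGraph_subset_iff.1 h.subset i)).symm

end FunctionGraph

theorem functionGraph_subset_sup_iff_mem_descSet {N q : ℕ} {c : Fin N → Fin q}
    {D : Finset (Fin N → Fin q)} : functionGraph c ⊆ D.sup functionGraph ↔ c ∈ descSet D := by
  simp only [functionGraph_subset_iff, Finset.mem_sup, mem_functionGraph, mem_descSet, eq_comm]

theorem isCoverFree_image_functionGraph_iff {N q t : ℕ} {C : Finset (Fin N → Fin q)} :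
    IsCoverFree t (C.image functionGraph) ↔ IsFrameproof t C := by
  simp only [isCoverFree_image_iff functionGraph_injective,
    functionGraph_subset_sup_iff_mem_descSet, isFrameproof_iff_forall_notMem_descSet]

theorem stmt_4_general (N q t : ℕ) (C : Finset (Fin N → Fin q)) :
    (IsCoverFree t (C.image functionGraph) ↔ IsFrameproof t C) ∧
      (C.image functionGraph).card = C.card :=
  ⟨isCoverFree_image_functionGraph_iff, Finset.card_image_of_injective _ functionGraph_injective⟩

/-- Every binary `t`-frameproof code of length `N` with `n` codewords induces a
`t`-cover-free family of `n` subsets of a `2N`-element set (here `Fin N × Fin 2`):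
replacing each entry `0` of the representation matrix by the column `(1,0)ᵀ` and each
entry `1` by `(0,1)ᵀ`, codeword `c` becomes the subset `{(i, c i) : i}`. -/
theorem stmt_4 (N t : ℕ) (C : Finset (Fin N → Fin 2)) (hC : IsFrameproof t C) :
    IsCoverFree t
        (C.image fun c => Finset.univ.image fun i : Fin N => (i, c i)) ∧
      (C.image fun c => Finset.univ.image fun i : Fin N => (i, c i)).card
        = C.card :=
  (stmt_4_general N 2 t C).imp_left fun h => h.2 hC
end

section
/- Let t ≥ 2, set v = ⌊(t/2+1)²⌋, and let 0 ≤ r ≤ v−2 be the integer with N ≡ r (mod v−1). Then every q-ary t-parent-identifying code of length N has at most r·q^⌈N/(v−1)⌉ + (v−1−r)·q^⌊N/(v−1)⌋ codewords; that is, M_IPP(N,q,t) ≤ r·q^⌈N/(v−1)⌉ + (v−1−r)·q^⌊N/(v−1)⌋. -/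
/-- `C` is a `t`-parent-identifying (t-IPP) code: for every word `x`, if the collection
`P_t(x)` of parent sets `D ⊆ C`, `|D| ≤ t`, `x ∈ desc(D)` is nonempty, then the
intersection of all members of `P_t(x)` is nonempty. -/
def IsIPP {N q : ℕ} (t : ℕ) (C : Finset (Fin N → Fin q)) : Prop :=
  ∀ x : Fin N → Fin q,
    (∃ D : Finset (Fin N → Fin q), D ⊆ C ∧ D.card ≤ t ∧ x ∈ descSet D) →
    ∃ c : Fin N → Fin q,
      ∀ D : Finset (Fin N → Fin q), D ⊆ C → D.card ≤ t → x ∈ descSet D → c ∈ D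

/-!
Split the coordinates into `m` blocks, and say that two distinct words are twins at a block if they
agree on it. Deleting, one at a time, codewords which have no twin at some block removes at most as
many words as there are restrictions to blocks, so a code larger than the claimed bound contains a
nonempty subcode in which every word has a twin at every block.

Fix `k` and `l`. In such a subcode, adjoining twins one at a time yields a set of words `T` that
contains twins at every block, or has size `k + 1` and contains twins at `k` of the blocks. Assemble
a word `x` from `T` block by block: where `T` contains twins use one of them, and share out the
other blocks so that no word of `T` receives more than `l`. Then `T` is a parent set of `x`, but any
word of `T` may be replaced by at most `l` twins, so no word is common to all parent sets of size
`k + l`. This works as long as `m < (k + 1) * (l + 1)`; the best choice for `k + l = t` is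
`k = ⌊t / 2⌋`.
-/

open Finset

section Twins

variable {κ W : Type*} {β : κ → Type*}

/-- Every word of `C` has a *twin* in `C` at every index `i`: another word with the same image
under `π i`. For codes, `π i` is the restriction to the `i`-th block of coordinates. -/
def HasTwins (π : ∀ i, W → β i) (C : Finset W) : Prop :=
  ∀ c ∈ C, ∀ i, ∃ d ∈ C, d ≠ c ∧ π i d = π i c

theorem exists_hasTwins_subset [Fintype κ] [∀ i, DecidableEq (β i)] (π : ∀ i, W → β i)
    {C : Finset W} (hC : ∑ i, #(C.image (π i)) < #C) :
    ∃ C' ⊆ C, C'.Nonempty ∧ HasTwins π C' := by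
  classical
  induction C using Finset.strongInduction with
  | H C ih =>
    by_cases htwins : HasTwins π C
    · exact ⟨C, Subset.rfl, card_pos.mp (by omega), htwins⟩
    obtain ⟨c, hc, i, hunique⟩ :
        ∃ c ∈ C, ∃ i, ∀ d ∈ C, d ≠ c → π i d ≠ π i c := by
      simpa only [HasTwins, not_forall, not_exists, not_and, exists_prop] using htwins
    have himage (j : κ) : (C.erase c).image (π j) ⊆ C.image (π j) :=
      image_subset_image (erase_subset c C)
    have himage_i : (C.erase c).image (π i) ⊂ C.image (π i) := by
      refine (ssubset_iff_of_subset (himage i)).mpr ⟨π i c, mem_image_of_mem _ hc, fun hmem ↦ ?_⟩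
      obtain ⟨d, hd, hdc⟩ := mem_image.mp hmem
      exact hunique d (mem_of_mem_erase hd) (ne_of_mem_erase hd) hdc
    have hsum : ∑ j, #((C.erase c).image (π j)) < ∑ j, #(C.image (π j)) :=
      sum_lt_sum (fun j _ ↦ card_le_card (himage j)) ⟨i, mem_univ i, card_lt_card himage_i⟩
    have hcard := card_erase_add_one hc
    obtain ⟨C', hC', h⟩ := ih (C.erase c) (erase_ssubset hc) (by omega)
    exact ⟨C', hC'.trans (erase_subset c C), h⟩

open Classical in
/-- The indices at which `T` contains no two twins. -/
noncomputable def separatingIndices [Fintype κ] (π : ∀ i, W → β i) (T : Finset W) : Finset κ :=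
  {i | Set.InjOn (π i) T}

@[simp]
theorem mem_separatingIndices [Fintype κ] {π : ∀ i, W → β i} {T : Finset W} {i : κ} :
    i ∈ separatingIndices π T ↔ Set.InjOn (π i) T := by
  simp [separatingIndices]

theorem HasTwins.exists_insert_separatingIndices_ssubset [Fintype κ] [DecidableEq W]
    {π : ∀ i, W → β i} {C T : Finset W} (hC : HasTwins π C) (hTC : T ⊆ C) (hT : T.Nonempty)
    (hsep : (separatingIndices π T).Nonempty) :
    ∃ d ∈ C, d ∉ T ∧ separatingIndices π (insert d T) ⊂ separatingIndices π T := by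
  obtain ⟨c, hc⟩ := hT
  obtain ⟨i, hi⟩ := hsep
  obtain ⟨d, hdC, hdc, hπ⟩ := hC c (hTC hc) i
  have hdT : d ∉ T := fun hdT ↦ hdc (mem_separatingIndices.mp hi hdT hc hπ)
  refine ⟨d, hdC, hdT, (ssubset_iff_of_subset fun j hj ↦ ?_).mpr ⟨i, hi, fun hi' ↦ ?_⟩⟩
  · exact mem_separatingIndices.mpr
      ((mem_separatingIndices.mp hj).mono (coe_subset.mpr (subset_insert d T)))
  · exact hdc (mem_separatingIndices.mp hi' (mem_insert_self d T) (mem_insert_of_mem hc) hπ)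

theorem HasTwins.exists_card_separatingIndices_le [Fintype κ] {π : ∀ i, W → β i} {C : Finset W}
    (hC : HasTwins π C) (hne : C.Nonempty) (k : ℕ) :
    ∃ T ⊆ C, T.Nonempty ∧ #T ≤ k + 1 ∧
      (separatingIndices π T = ∅ ∨
        #T = k + 1 ∧ #(separatingIndices π T) + k ≤ Fintype.card κ) := by
  classical
  induction k with
  | zero =>
    obtain ⟨c, hc⟩ := hne
    exact ⟨{c}, singleton_subset_iff.mpr hc, singleton_nonempty c, by simp,
      .inr ⟨by simp, card_le_univ _⟩⟩
  | succ k ih =>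
    obtain ⟨T, hTC, hT, hcard, hsep | ⟨hcard_eq, hsep⟩⟩ := ih
    · exact ⟨T, hTC, hT, by omega, .inl hsep⟩
    obtain hempty | hnonempty := (separatingIndices π T).eq_empty_or_nonempty
    · exact ⟨T, hTC, hT, by omega, .inl hempty⟩
    obtain ⟨d, hd, hdT, hssub⟩ :=
      hC.exists_insert_separatingIndices_ssubset hTC hT hnonempty
    have hinsert := card_insert_of_notMem hdT
    have hlt := card_lt_card hssub
    exact ⟨insert d T, insert_subset hd hTC, insert_nonempty d T, by omega,
      .inr ⟨by omega, by omega⟩⟩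

theorem exists_mapsTo_card_fiber_le [Nonempty W] [DecidableEq W] (s : Finset κ) (T : Finset W)
    {l : ℕ} (hs : #s ≤ #T * l) :
    ∃ f : κ → W, Set.MapsTo f s T ∧ ∀ c, #{i ∈ s | f i = c} ≤ l := by
  have hle : (s : Set κ).encard ≤ (↑(T ×ˢ range l) : Set (W × ℕ)).encard := by
    rw [Set.encard_coe_eq_coe_finsetCard, Set.encard_coe_eq_coe_finsetCard, card_product,
      card_range]
    exact_mod_cast hs
  obtain ⟨g, hmaps, hinj⟩ := s.finite_toSet.exists_injOn_of_encard_le hle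
  have hg {i : κ} (hi : i ∈ s) : (g i).1 ∈ T ∧ (g i).2 ∈ range l := mem_product.mp (hmaps hi)
  refine ⟨fun i ↦ (g i).1, fun i hi ↦ (hg hi).1, fun c ↦ ?_⟩
  rw [← card_range l]
  refine card_le_card_of_injOn (fun i ↦ (g i).2) (fun i hi ↦ (hg (mem_filter.mp hi).1).2) ?_
  intro i hi j hj hij
  obtain ⟨his, hic⟩ := mem_filter.mp hi
  obtain ⟨hjs, hjc⟩ := mem_filter.mp hj
  exact hinj his hjs (Prod.ext (hic.trans hjc.symm) hij)

open Classical in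
/-- For a choice `g i ∈ T` of one word per index, the indices at which `c` is chosen and has no
twin in `T` that could be chosen instead. -/
noncomputable def irreplaceableIndices [Fintype κ] (π : ∀ i, W → β i) (T : Finset W) (g : κ → W)
    (c : W) : Finset κ :=
  {i | g i = c ∧ ∀ d ∈ T, π i d = π i c → d = c}

@[simp]
theorem mem_irreplaceableIndices [Fintype κ] {π : ∀ i, W → β i} {T : Finset W} {g : κ → W} {c : W}
    {i : κ} :
    i ∈ irreplaceableIndices π T g c ↔ g i = c ∧ ∀ d ∈ T, π i d = π i c → d = c := by
  simp [irreplaceableIndices]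

theorem exists_card_irreplaceableIndices_le [Fintype κ] (π : ∀ i, W → β i) {T : Finset W}
    (hT : T.Nonempty) {l : ℕ} (hsep : #(separatingIndices π T) ≤ #T * l) :
    ∃ g : κ → W, (∀ i, g i ∈ T) ∧ ∀ c, #(irreplaceableIndices π T g c) ≤ l := by
  classical
  have : Nonempty W := ⟨hT.choose⟩
  obtain ⟨f, hfT, hf⟩ := exists_mapsTo_card_fiber_le (separatingIndices π T) T hsep
  have hchoice (i : κ) : ∃ a ∈ T, (Set.InjOn (π i) T → a = f i) ∧
      (¬ Set.InjOn (π i) T → ∃ d ∈ T, π i d = π i a ∧ d ≠ a) := by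
    by_cases hi : Set.InjOn (π i) T
    · exact ⟨f i, hfT (mem_separatingIndices.mpr hi), fun _ ↦ rfl, fun h ↦ absurd hi h⟩
    · obtain ⟨d, hd, a, ha, hπ, hne⟩ : ∃ d ∈ T, ∃ a ∈ T, π i d = π i a ∧ d ≠ a := by
        simpa only [Set.InjOn, mem_coe, not_forall, exists_prop] using hi
      exact ⟨a, ha, fun h ↦ absurd h hi, fun _ ↦ ⟨d, hd, hπ, hne⟩⟩
  choose g hgT hg_sep hg_twin using hchoice
  refine ⟨g, hgT, fun c ↦ (card_le_card fun i hi ↦ ?_).trans (hf c)⟩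
  obtain ⟨rfl, hlone⟩ := mem_irreplaceableIndices.mp hi
  have hinj : Set.InjOn (π i) T := by
    by_contra h
    obtain ⟨d, hd, hπ, hne⟩ := hg_twin i h
    exact hne (hlone d hd hπ)
  exact mem_filter.mpr ⟨mem_separatingIndices.mpr hinj, (hg_sep i hinj).symm⟩

theorem HasTwins.exists_replacement [Fintype κ] {π : ∀ i, W → β i} {C T : Finset W}
    (hC : HasTwins π C) (hTC : T ⊆ C) {g : κ → W} (hg : ∀ i, g i ∈ T) {c : W} (hc : c ∈ T) :
    ∃ D ⊆ C, c ∉ D ∧ #D + 1 ≤ #T + #(irreplaceableIndices π T g c) ∧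
      ∀ i, ∃ d ∈ D, π i (g i) = π i d := by
  classical
  choose twin htwinC htwin_ne htwin using hC c (hTC hc)
  refine ⟨T.erase c ∪ (irreplaceableIndices π T g c).image twin, ?_, ?_, ?_, fun i ↦ ?_⟩
  · exact union_subset ((erase_subset c T).trans hTC) (image_subset_iff.mpr fun i _ ↦ htwinC i)
  · simp [htwin_ne]
  · have hunion := card_union_le (T.erase c) ((irreplaceableIndices π T g c).image twin)
    have himage := card_image_le (s := irreplaceableIndices π T g c) (f := twin)
    have herase := card_erase_add_one hc
    omega
  · by_cases hgc : g i = c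
    · by_cases hlone : ∀ d ∈ T, π i d = π i c → d = c
      · have hi := mem_irreplaceableIndices.mpr ⟨hgc, hlone⟩
        exact ⟨twin i, mem_union_right _ (mem_image_of_mem _ hi), hgc ▸ (htwin i).symm⟩
      · push Not at hlone
        obtain ⟨d, hd, hπ, hdc⟩ := hlone
        exact ⟨d, mem_union_left _ (mem_erase.mpr ⟨hdc, hd⟩), hgc ▸ hπ.symm⟩
    · exact ⟨g i, mem_union_left _ (mem_erase.mpr ⟨hgc, hg i⟩), rfl⟩

end Twins

section Codes

variable {κ : Type*} {N q : ℕ}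

theorem IsIPP.mono {t : ℕ} {C C' : Finset (Fin N → Fin q)} (hC : IsIPP t C) (h : C' ⊆ C) :
    IsIPP t C' := fun x ⟨D, hDC', hD⟩ ↦
  (hC x ⟨D, hDC'.trans h, hD⟩).imp fun _ hc D hD ↦ hc D (hD.trans h)

/-- The restriction of words to the `i`-th block of the partition of the coordinates into the
fibres of `b`. -/
def blockRestrict {ι α : Type*} (b : ι → κ) (i : κ) : (ι → α) → (b ⁻¹' {i} → α) :=
  (b ⁻¹' {i}).domRestrict

theorem mem_descSet_of_blockRestrict {b : Fin N → κ} {g : κ → Fin N → Fin q}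
    {D : Finset (Fin N → Fin q)}
    (h : ∀ i, ∃ d ∈ D, blockRestrict b i (g i) = blockRestrict b i d) :
    (fun j ↦ g (b j) j) ∈ descSet D := fun j ↦
  let ⟨d, hd, hgd⟩ := h (b j)
  ⟨d, hd, congrFun hgd ⟨j, rfl⟩⟩

theorem not_isIPP_of_hasTwins [Fintype κ] {k l : ℕ} (hl : 0 < l)
    (hκ : Fintype.card κ < (k + 1) * (l + 1)) {b : Fin N → κ} {C : Finset (Fin N → Fin q)}
    (hne : C.Nonempty) (htwins : HasTwins (blockRestrict b) C) : ¬ IsIPP (k + l) C := by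
  intro hC
  obtain ⟨T, hTC, hT, hTk, hsep⟩ := htwins.exists_card_separatingIndices_le hne k
  have hshare : #(separatingIndices (blockRestrict b) T) ≤ #T * l := by
    obtain hsep | ⟨hTk, hsep⟩ := hsep
    · simp [hsep]
    · rw [hTk]
      linarith
  obtain ⟨g, hgT, hg⟩ := exists_card_irreplaceableIndices_le _ hT hshare
  have hTx : (fun j ↦ g (b j) j) ∈ descSet T :=
    mem_descSet_of_blockRestrict fun i ↦ ⟨g i, hgT i, rfl⟩
  obtain ⟨c, hc⟩ := hC _ ⟨T, hTC, by omega, hTx⟩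
  obtain ⟨D, hDC, hcD, hDcard, hDx⟩ :=
    htwins.exists_replacement hTC hgT (hc T hTC (by omega) hTx)
  have hgc := hg c
  exact hcD (hc D hDC (by omega) (mem_descSet_of_blockRestrict hDx))

theorem IsIPP.card_le_sum_pow [Fintype κ] [DecidableEq κ] {k l : ℕ} (hl : 0 < l)
    (hκ : Fintype.card κ < (k + 1) * (l + 1)) (b : Fin N → κ) {C : Finset (Fin N → Fin q)}
    (hC : IsIPP (k + l) C) : #C ≤ ∑ i, q ^ #{j | b j = i} := by
  classical
  by_contra! hlt
  have himage (i : κ) : #(C.image (blockRestrict b i)) ≤ q ^ #{j | b j = i} := by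
    simpa [Fintype.card_subtype] using card_le_univ (C.image (blockRestrict b i))
  obtain ⟨C', hC', hne, htwins⟩ :=
    exists_hasTwins_subset (blockRestrict b) ((sum_le_sum fun i _ ↦ himage i).trans_lt hlt)
  exact not_isIPP_of_hasTwins hl hκ hne htwins (hC.mono hC')

end Codes

theorem card_filter_mod_eq (N : ℕ) {n i : ℕ} (hi : i < n) :
    #{j : Fin N | j.1 % n = i} = N / n + if i < N % n then 1 else 0 := by
  have hcount := Nat.count_modEq_card N (Nat.zero_lt_of_lt hi) i
  simp only [Nat.count_eq_card_filter_range, Nat.ModEq, Nat.mod_eq_of_lt hi] at hcount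
  rw [← hcount, card_filter, card_filter,
    Fin.sum_univ_eq_sum_range (fun j ↦ if j % n = i then 1 else 0)]

theorem ceilDiv_eq_div_add_one {N n : ℕ} (hn : 0 < n) (h : N % n ≠ 0) :
    N ⌈/⌉ n = N / n + 1 := by
  have hdiv := Nat.div_add_mod N n
  have hmul : (N / n + 1) * n = n * (N / n) + n := by ring
  have hmod := Nat.mod_lt N hn
  rw [Nat.ceilDiv_eq_add_pred_div, Nat.div_eq_iff hn]
  omega

theorem sum_pow_card_filter_mod_eq (N q : ℕ) {n : ℕ} (hn : 0 < n) :
    ∑ i : Fin n, q ^ #{j : Fin N | j.1 % n = i} =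
      N % n * q ^ (N ⌈/⌉ n) + (n - N % n) * q ^ (N / n) := by
  have hsmall : #{i : Fin n | i.1 < N % n} = N % n := by
    rw [Fin.card_filter_val_lt, min_eq_right (Nat.mod_lt N hn).le]
  have hlarge : #{i : Fin n | ¬ i.1 < N % n} = n - N % n := by
    have hsum := card_filter_add_card_filter_not (s := (univ : Finset (Fin n))) (·.1 < N % n)
    rw [card_fin] at hsum
    omega
  have hceil : N % n * q ^ (N ⌈/⌉ n) = N % n * q ^ (N / n + 1) := by
    obtain h | h := eq_or_ne (N % n) 0
    · simp [h]
    · rw [ceilDiv_eq_div_add_one hn h]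
  calc ∑ i : Fin n, q ^ #{j : Fin N | j.1 % n = i}
      = ∑ i : Fin n, if i.1 < N % n then q ^ (N / n + 1) else q ^ (N / n) :=
        sum_congr rfl fun i _ ↦ by rw [card_filter_mod_eq N i.2]; split_ifs <;> rfl
    _ = N % n * q ^ (N / n + 1) + (n - N % n) * q ^ (N / n) := by
        simp only [sum_ite, sum_const, hsmall, hlarge, smul_eq_mul]
    _ = N % n * q ^ (N ⌈/⌉ n) + (n - N % n) * q ^ (N / n) := by rw [hceil]

theorem floor_half_add_one_sq (t : ℕ) :
    ⌊((t : ℝ) / 2 + 1) ^ 2⌋₊ = (t / 2 + 1) * (t - t / 2 + 1) := by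
  rw [Nat.floor_eq_iff (by positivity)]
  obtain ⟨m, rfl | rfl⟩ := t.even_or_odd'
  · rw [show 2 * m / 2 = m by omega, show 2 * m - m = m by omega]
    push_cast
    constructor <;> nlinarith
  · rw [show (2 * m + 1) / 2 = m by omega, show 2 * m + 1 - m = m + 1 by omega]
    push_cast
    constructor <;> nlinarith

/-- Let `t ≥ 2`, `v = ⌊(t/2+1)²⌋` and `r ≡ N (mod v−1)` with `0 ≤ r ≤ v−2`. Then
every `q`-ary `t`-IPP code of length `N` has at most
`r·q^⌈N/(v−1)⌉ + (v−1−r)·q^⌊N/(v−1)⌋` codewords. -/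
theorem stmt_6 (N q t v r : ℕ) (ht : 2 ≤ t)
    (hv : v = ⌊((t : ℝ) / 2 + 1) ^ 2⌋₊) (hr : r = N % (v - 1))
    (C : Finset (Fin N → Fin q)) (hC : IsIPP t C) :
    C.card ≤ r * q ^ (N ⌈/⌉ (v - 1)) + (v - 1 - r) * q ^ (N / (v - 1)) := by
  have hv' : v = (t / 2 + 1) * (t - t / 2 + 1) := hv.trans (floor_half_add_one_sq t)
  have hblocks : 0 < v - 1 := by
    have hv4 : 2 * 2 ≤ v := hv' ▸ Nat.mul_le_mul (by omega) (by omega)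
    omega
  rw [show t = t / 2 + (t - t / 2) by omega] at hC
  calc #C
      ≤ ∑ i, q ^ #{j : Fin N | (⟨j % (v - 1), Nat.mod_lt _ hblocks⟩ : Fin (v - 1)) = i} :=
        hC.card_le_sum_pow (by omega) (by rw [Fintype.card_fin]; omega) _
    _ = ∑ i : Fin (v - 1), q ^ #{j : Fin N | j.1 % (v - 1) = i} := by simp only [Fin.ext_iff]
    _ = r * q ^ (N ⌈/⌉ (v - 1)) + (v - 1 - r) * q ^ (N / (v - 1)) := by
        rw [sum_pow_card_filter_mod_eq N q hblocks, hr]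
end

section
/- For every positive integer N there exists a constant c (depending only on N) such that for every alphabet size q, every q-ary 3-traceability code of length N has at most c·q^⌈N/9⌉ codewords; that is, M_TA(N,q,3) ≤ c·q^⌈N/9⌉. -/
/-- `C` is a `t`-traceability (t-TA) code: for every `D ⊆ C` with `|D| ≤ t` and every
`x ∈ desc(D)`, the minimum of `d(x,c)` over `c ∈ D` is strictly smaller than `d(x,y)`
for every `y ∈ C \ D`. -/
def IsTA {N q : ℕ} (t : ℕ) (C : Finset (Fin N → Fin q)) : Prop :=
  ∀ D : Finset (Fin N → Fin q), D ⊆ C → D.card ≤ t →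
    ∀ x ∈ descSet D, ∃ c ∈ D, ∀ y ∈ C \ D, hammingDist x c < hammingDist x y

/-!
Call a codeword heavy on a coordinate set `T` when many codewords share its symbols on `T`, and let
`k = ⌈N/9⌉`. After pruning a code with too many words, every codeword is heavy on every `k`-set.
Among the codewords showing a maximal heavy pattern there are generic ones, which avoid any few
prescribed words off the pattern.

Take `x` heavy on `A` with `|A|` as large as possible, and let `b`, `c` be generic for maximal heavy
patterns agreeing with `x` on `k` coordinates chosen outside what is already covered; let `a` be
generic for the pattern of `x` on `A`. The set `U` where `x` agrees with one of `a`, `b`, `c` then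
has at least `min N (|A| + 2k)` elements, whereas each of the three agrees with `x` on at most `|A|`
coordinates. As `k ≤ |A|` and `N ≤ 9k`, this leaves enough room for a descendant of `{a, b, c}` that
equals `x` on `U` and agrees with none of `a`, `b`, `c` on more than `|U|` coordinates, so that `x`
is at least as close to it as they are.
-/

open Finset Function

section Agree

variable {ι α : Type*} [Fintype ι] [DecidableEq α]

/-- The coordinates in which two words agree: the complement of the set counted by
`hammingDist`. -/
def agree (x y : ι → α) : Finset ι := {i | x i = y i}

@[simp]
theorem mem_agree {x y : ι → α} {i : ι} : i ∈ agree x y ↔ x i = y i := by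
  simp [agree]

theorem agree_self (x : ι → α) : agree x x = univ :=
  filter_true_of_mem fun _ _ => rfl

theorem agree_comm (x y : ι → α) : agree x y = agree y x :=
  filter_congr fun _ _ => eq_comm

theorem ne_of_agree_subset {x y : ι → α} {T : Finset ι} (h : agree x y ⊆ T) (hT : T ≠ univ) :
    x ≠ y := by
  rintro rfl
  exact hT (univ_subset_iff.1 (agree_self x ▸ h))

theorem agree_subset_of_agree_subset {w y z : ι → α} {T U : Finset ι} (hwz : agree w z ⊆ T)
    (hwy : ∀ i ∈ T, w i = y i) (hzy : agree z y ⊆ U) : agree z w ⊆ U := by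
  intro i hi
  rw [mem_agree] at hi
  exact hzy (mem_agree.2 (hi.trans (hwy i (hwz (mem_agree.2 hi.symm)))))

theorem card_agree_add_hammingDist (x y : ι → α) :
    #(agree x y) + hammingDist x y = Fintype.card ι :=
  card_filter_add_card_filter_not _

end Agree

theorem exists_card_eq_min_le_card_union {ι : Type*} [Fintype ι] [DecidableEq ι] {k : ℕ}
    (hk : k ≤ Fintype.card ι) (V : Finset ι) :
    ∃ S : Finset ι, #S = k ∧ min (Fintype.card ι) (#V + k) ≤ #(V ∪ S) := by
  obtain h | h := le_total k #Vᶜ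
  · obtain ⟨S, hSV, rfl⟩ := exists_subset_card_eq h
    refine ⟨S, rfl, ?_⟩
    rw [card_union_of_disjoint (disjoint_compl_right.mono_right hSV)]
    exact min_le_right _ _
  · obtain ⟨S, hVS, -, hS⟩ := exists_subsuperset_card_eq (subset_univ Vᶜ) h hk
    have hcover : V ∪ S = univ :=
      univ_subset_iff.1 <| (union_compl V).symm.subset.trans (union_subset_union_right hVS)
    exact ⟨S, hS, by simp [hcover]⟩

theorem card_insert_image_erase_le {κ β : Type*} [Fintype κ] [DecidableEq κ] [DecidableEq β]
    (d : κ → β) (x : β) (j : κ) : #(insert x ((univ.erase j).image d)) ≤ Fintype.card κ :=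
  calc #(insert x ((univ.erase j).image d))
      ≤ #(univ.erase j) + 1 := (card_insert_le _ _).trans (Nat.succ_le_succ card_image_le)
    _ = Fintype.card κ := card_erase_add_one (mem_univ j)

theorem exists_forall_card_filter_eq_le {ι κ : Type*} [Fintype κ] [Nonempty κ] [DecidableEq κ]
    {R : Finset ι} {r : κ → ℕ} (h : #R ≤ ∑ j, r j) :
    ∃ f : ι → κ, ∀ j, #{i ∈ R | f i = j} ≤ r j := by
  classical
  induction R using Finset.induction_on with
  | empty => exact ⟨fun _ => Classical.arbitrary κ, by simp⟩
  | insert i R hi ih =>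
    rw [card_insert_of_notMem hi] at h
    obtain ⟨f, hf⟩ := ih (by omega)
    obtain ⟨j, hj⟩ : ∃ j, #{l ∈ R | f l = j} < r j := by
      by_contra! hfull
      have hsum : ∑ j, #{l ∈ R | f l = j} = #R :=
        (card_eq_sum_card_fiberwise fun _ _ => mem_coe.2 (mem_univ _)).symm
      have := sum_le_sum fun j (_ : j ∈ univ) => hfull j
      omega
    have hcongr (l : κ) : {m ∈ R | update f i j m = l} = {m ∈ R | f m = l} :=
      filter_congr fun m hm => by rw [update_of_ne (ne_of_mem_of_not_mem hm hi)]
    refine ⟨update f i j, fun l => ?_⟩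
    rw [filter_insert, hcongr, update_self]
    split_ifs with hjl
    · exact (card_insert_le _ _).trans (hjl ▸ hj)
    · exact hf l

section Fiber

variable {ι α : Type*} [DecidableEq α]

/-- The words of the code `C` that agree with `x` on the coordinate set `T`. -/
def fiber (C : Finset (ι → α)) (x : ι → α) (T : Finset ι) : Finset (ι → α) :=
  {y ∈ C | ∀ i ∈ T, y i = x i}

variable {C : Finset (ι → α)} {x y : ι → α} {S T : Finset ι}

theorem mem_fiber : y ∈ fiber C x T ↔ y ∈ C ∧ ∀ i ∈ T, y i = x i :=
  mem_filter

theorem fiber_subset : fiber C x T ⊆ C :=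
  filter_subset _ _

theorem self_mem_fiber (hx : x ∈ C) : x ∈ fiber C x T :=
  mem_fiber.2 ⟨hx, fun _ _ => rfl⟩

@[simp]
theorem fiber_empty : fiber C x ∅ = C := by
  simp [fiber]

theorem fiber_subset_fiber (hST : S ⊆ T) (hy : y ∈ fiber C x S) : fiber C y T ⊆ fiber C x S := by
  intro z hz
  rw [mem_fiber] at *
  exact ⟨hz.1, fun i hi => (hz.2 i (hST hi)).trans (hy.2 i hi)⟩

theorem agree_eq_inter_agree [Fintype ι] [DecidableEq ι] {z : ι → α} (hy : y ∈ fiber C x T)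
    (h : agree y z ⊆ T) : agree y z = T ∩ agree x z := by
  have hyx := (mem_fiber.1 hy).2
  ext i
  simp only [mem_inter, mem_agree]
  exact ⟨fun hi => have hiT := h (mem_agree.2 hi); ⟨hiT, hyx i hiT ▸ hi⟩,
    fun ⟨hiT, hi⟩ => (hyx i hiT).trans hi⟩

end Fiber

section Pruning

variable {ι α : Type*} [DecidableEq α]

/-- The total number of patterns that the words of `C` show on the coordinate sets in `𝒮`. -/
def patternCount (𝒮 : Finset (Finset ι)) (C : Finset (ι → α)) : ℕ :=
  ∑ S ∈ 𝒮, #(C.image S.restrict)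

variable {𝒮 : Finset (Finset ι)} {C : Finset (ι → α)}

theorem patternCount_le [Fintype α] :
    patternCount 𝒮 C ≤ ∑ S ∈ 𝒮, Fintype.card α ^ #S := by
  classical
  exact sum_le_sum fun S _ => (card_le_univ _).trans_eq (by simp)

theorem patternCount_sdiff_fiber_lt [DecidableEq (ι → α)] {S : Finset ι} (hS : S ∈ 𝒮)
    {x : ι → α} (hx : x ∈ C) : patternCount 𝒮 (C \ fiber C x S) < patternCount 𝒮 C := by
  have himage (T : Finset ι) : (C \ fiber C x S).image T.restrict ⊆ C.image T.restrict :=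
    image_subset_image sdiff_subset
  refine sum_lt_sum (fun T _ => card_le_card (himage T)) ⟨S, hS, card_lt_card ?_⟩
  refine (ssubset_iff_of_subset (himage S)).2 ⟨S.restrict x, mem_image_of_mem _ hx, fun hmem => ?_⟩
  obtain ⟨y, hy, hyx⟩ := mem_image.1 hmem
  obtain ⟨hyC, hyS⟩ := mem_sdiff.1 hy
  exact hyS (mem_fiber.2 ⟨hyC, fun i hi => congrFun hyx ⟨i, hi⟩⟩)

-- Removing a fiber of size at most `K` destroys a pattern, so the hypothesis survives the removal.
theorem exists_subset_lt_card_fiber_of_patternCount {K : ℕ} (h : K * patternCount 𝒮 C < #C) :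
    ∃ C' ⊆ C, C'.Nonempty ∧ ∀ x ∈ C', ∀ S ∈ 𝒮, K < #(fiber C' x S) := by
  classical
  induction C using Finset.strongInduction with
  | H C ih =>
    by_cases hC : ∀ x ∈ C, ∀ S ∈ 𝒮, K < #(fiber C x S)
    · exact ⟨C, Subset.rfl, card_pos.1 (by omega), hC⟩
    push Not at hC
    obtain ⟨x, hx, S, hS, hsmall⟩ := hC
    have hssubset : C \ fiber C x S ⊂ C := sdiff_ssubset fiber_subset ⟨x, self_mem_fiber hx⟩
    have hcard := card_sdiff_add_card_eq_card (fiber_subset (C := C) (x := x) (T := S))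
    have hcount : K * (patternCount 𝒮 (C \ fiber C x S) + 1) ≤ K * patternCount 𝒮 C :=
      Nat.mul_le_mul_left K (patternCount_sdiff_fiber_lt hS hx)
    obtain ⟨C', hC', hrest⟩ := ih _ hssubset (by rw [mul_add_one] at hcount; omega)
    exact ⟨C', hC'.trans sdiff_subset, hrest⟩

theorem exists_subset_lt_card_fiber [Fintype α] {K : ℕ}
    (h : K * ∑ S ∈ 𝒮, Fintype.card α ^ #S < #C) :
    ∃ C' ⊆ C, C'.Nonempty ∧ ∀ x ∈ C', ∀ S ∈ 𝒮, K < #(fiber C' x S) :=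
  exists_subset_lt_card_fiber_of_patternCount <|
    (Nat.mul_le_mul_left K patternCount_le).trans_lt h

end Pruning

section Heavy

variable {ι α : Type*} [Fintype ι] [DecidableEq ι] [DecidableEq α]

/-- The pattern of `x` on `T` is heavy when more than `M ^ (N - |T|)` words of `C` show it, `N`
being the length. The threshold shrinks by a factor `M` with each coordinate added to `T`. -/
def IsHeavy (M : ℕ) (C : Finset (ι → α)) (x : ι → α) (T : Finset ι) : Prop :=
  M ^ #Tᶜ < #(fiber C x T)

/-- A heavy pattern that no codeword showing it extends to a heavy pattern on a larger set. -/
structure IsMaxHeavy (M : ℕ) (C : Finset (ι → α)) (x : ι → α) (T : Finset ι) : Prop where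
  isHeavy : IsHeavy M C x T
  not_isHeavy : ∀ z ∈ fiber C x T, ∀ U, T ⊂ U → ¬ IsHeavy M C z U

variable {M : ℕ} {C : Finset (ι → α)} {x y : ι → α} {S T : Finset ι}

theorem isHeavy_of_pow_card_lt (hM : 0 < M) (h : M ^ Fintype.card ι < #(fiber C x T))
    (hST : S ⊆ T) (hx : x ∈ C) : IsHeavy M C x S :=
  calc M ^ #Sᶜ ≤ M ^ Fintype.card ι := Nat.pow_le_pow_right hM (card_le_univ _)
    _ < #(fiber C x T) := h
    _ ≤ #(fiber C x S) := card_le_card (fiber_subset_fiber hST (self_mem_fiber hx))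

theorem IsHeavy.ne_univ (h : IsHeavy M C x T) : T ≠ univ := by
  rintro rfl
  have hsingle : #(fiber C x univ) ≤ 1 :=
    card_le_one.2 fun y hy z hz => funext fun i =>
      ((mem_fiber.1 hy).2 i (mem_univ i)).trans ((mem_fiber.1 hz).2 i (mem_univ i)).symm
  simp only [IsHeavy, compl_univ, card_empty, pow_zero] at h
  omega

theorem IsHeavy.exists_isMaxHeavy (hx : x ∈ C) (h : IsHeavy M C x S) :
    ∃ y ∈ fiber C x S, ∃ T, S ⊆ T ∧ IsMaxHeavy M C y T ∧
      ∀ z ∈ fiber C x S, ∀ U, S ⊆ U → IsHeavy M C z U → #U ≤ #T := by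
  classical
  let heavyPatterns : Finset ((ι → α) × Finset ι) := {p ∈ fiber C x S ×ˢ univ |
    S ⊆ p.2 ∧ IsHeavy M C p.1 p.2}
  have hmem (z U) : (z, U) ∈ heavyPatterns ↔ z ∈ fiber C x S ∧ S ⊆ U ∧ IsHeavy M C z U := by
    simp [heavyPatterns]
  obtain ⟨⟨y, T⟩, hyT, hmax⟩ := exists_max_image heavyPatterns (fun p => #p.2)
    ⟨(x, S), (hmem x S).2 ⟨self_mem_fiber hx, Subset.rfl, h⟩⟩
  obtain ⟨hy, hST, hT⟩ := (hmem y T).1 hyT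
  have hcard : ∀ z ∈ fiber C x S, ∀ U, S ⊆ U → IsHeavy M C z U → #U ≤ #T :=
    fun z hz U hSU hU => hmax (z, U) ((hmem z U).2 ⟨hz, hSU, hU⟩)
  refine ⟨y, hy, T, hST, ⟨hT, fun z hz U hTU hU => ?_⟩, hcard⟩
  exact (card_lt_card hTU).not_ge
    (hcard z (fiber_subset_fiber hST hy hz) U (hST.trans hTU.subset) hU)

theorem IsMaxHeavy.card_filter_eq_le (h : IsMaxHeavy M C y T) {i : ι} (hi : i ∉ T) (s : α) :
    #{w ∈ fiber C y T | w i = s} ≤ M ^ (#Tᶜ - 1) := by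
  obtain hempty | ⟨z, hz⟩ := {w ∈ fiber C y T | w i = s}.eq_empty_or_nonempty
  · simp [hempty]
  obtain ⟨hzy, rfl⟩ := mem_filter.1 hz
  have hsub : {w ∈ fiber C y T | w i = z i} ⊆ fiber C z (insert i T) := by
    simp only [subset_iff, mem_filter, mem_fiber, forall_mem_insert] at hzy ⊢
    exact fun w hw => ⟨hw.1.1, hw.2, fun j hj => (hw.1.2 j hj).trans (hzy.2 j hj).symm⟩
  have hlight := h.not_isHeavy z hzy _ (ssubset_insert hi)
  rw [IsHeavy, not_lt, compl_insert, card_erase_of_mem (mem_compl.2 hi)] at hlight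
  exact (card_le_card hsub).trans hlight

theorem IsMaxHeavy.exists_mem_fiber_agree_subset (h : IsMaxHeavy M C y T) (Z : Finset (ι → α))
    (hM : #Z * Fintype.card ι ≤ M) : ∃ w ∈ fiber C y T, ∀ z ∈ Z, agree w z ⊆ T := by
  by_contra! hbad
  have hcover : fiber C y T ⊆ Z.biUnion fun z => Tᶜ.biUnion fun i =>
      {w ∈ fiber C y T | w i = z i} := by
    intro w hw
    obtain ⟨z, hz, hwz⟩ := hbad w hw
    obtain ⟨i, hi, hiT⟩ := not_subset.1 hwz
    simp only [mem_biUnion, mem_filter, mem_compl]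
    exact ⟨z, hz, i, hiT, hw, mem_agree.1 hi⟩
  have hpos : #Tᶜ ≠ 0 := by simpa using h.isHeavy.ne_univ
  refine h.isHeavy.not_ge ?_
  calc #(fiber C y T)
      ≤ #Z * (#Tᶜ * M ^ (#Tᶜ - 1)) := (card_le_card hcover).trans <|
        card_biUnion_le_card_mul _ _ _ fun z _ => card_biUnion_le_card_mul _ _ _ fun i hi =>
          h.card_filter_eq_le (mem_compl.1 hi) (z i)
    _ ≤ #Z * (Fintype.card ι * M ^ (#Tᶜ - 1)) := by gcongr; exact card_le_univ _
    _ ≤ M * M ^ (#Tᶜ - 1) := by rw [← mul_assoc]; gcongr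
    _ = M ^ #Tᶜ := mul_pow_sub_one hpos M

theorem exists_forall_mem_fiber_agree_subset {κ : Type*} [Fintype κ]
    (hM : Fintype.card κ * Fintype.card ι ≤ M) {y : κ → ι → α} {T : κ → Finset ι}
    (h : ∀ j, IsMaxHeavy M C (y j) (T j)) (x : ι → α) :
    ∃ d : κ → ι → α, ∀ j, d j ∈ fiber C (y j) (T j) ∧ agree (d j) x ⊆ T j ∧
      ∀ l ≠ j, agree (d j) (d l) ⊆ T j := by
  classical
  -- Replace the `y j` by generic words one at a time. Once `d l` avoids `y j` off `T l`, it also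
  -- avoids off `T l` the word replacing `y j`: the new word meets `d l` only on `T j`, where it
  -- equals `y j`.
  suffices hpartial : ∀ s : Finset κ, ∃ d : κ → ι → α, (∀ j ∉ s, d j = y j) ∧
      ∀ j ∈ s, d j ∈ fiber C (y j) (T j) ∧ agree (d j) x ⊆ T j ∧
        ∀ l ≠ j, agree (d j) (d l) ⊆ T j by
    obtain ⟨d, -, hd⟩ := hpartial univ
    exact ⟨d, fun j => hd j (mem_univ j)⟩
  intro s
  induction s using Finset.induction_on with
  | empty => exact ⟨y, by simp⟩
  | insert j s hj ih =>
    obtain ⟨d, hd_out, hd⟩ := ih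
    obtain ⟨w, hw, hwZ⟩ := (h j).exists_mem_fiber_agree_subset _ <|
      (Nat.mul_le_mul_right _ (card_insert_image_erase_le d x j)).trans hM
    simp only [forall_mem_insert, forall_mem_image, mem_erase, mem_univ, and_true] at hwZ
    refine ⟨update d j w, fun l hl => ?_, fun l hl => ?_⟩
    · rw [mem_insert, not_or] at hl
      rw [update_of_ne hl.1, hd_out l hl.2]
    obtain rfl | hlj := eq_or_ne l j
    · rw [update_self]
      exact ⟨hw, hwZ.1, fun m hm => by rw [update_of_ne hm]; exact hwZ.2 hm⟩
    · have hls := mem_of_mem_insert_of_ne hl hlj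
      rw [update_of_ne hlj]
      refine ⟨(hd l hls).1, (hd l hls).2.1, fun m hm => ?_⟩
      obtain rfl | hmj := eq_or_ne m j
      · rw [update_self]
        exact agree_subset_of_agree_subset (hwZ.2 hlj)
          (hd_out m hj ▸ (mem_fiber.1 hw).2) ((hd l hls).2.2 m hlj.symm)
      · rw [update_of_ne hmj]
        exact (hd l hls).2.2 m hm

theorem exists_isMaxHeavy_min_le_card_union {k : ℕ} (hM : 0 < M) (hk : k ≤ Fintype.card ι)
    (hx : x ∈ C) (hC : ∀ S, #S = k → M ^ Fintype.card ι < #(fiber C x S)) (V : Finset ι) :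
    ∃ y ∈ C, ∃ T, IsMaxHeavy M C y T ∧
      min (Fintype.card ι) (#V + k) ≤ #(V ∪ T ∩ agree y x) := by
  obtain ⟨S, hSk, hS⟩ := exists_card_eq_min_le_card_union hk V
  obtain ⟨y, hy, T, hST, hT, -⟩ :=
    (isHeavy_of_pow_card_lt hM (hC S hSk) Subset.rfl hx).exists_isMaxHeavy hx
  have hyx : S ⊆ agree y x := fun i hi => mem_agree.2 ((mem_fiber.1 hy).2 i hi)
  exact ⟨y, fiber_subset hy, T, hT,
    hS.trans (card_le_card (union_subset_union_right (subset_inter hST hyx)))⟩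

end Heavy

namespace IsTA

variable {N q t : ℕ} {C : Finset (Fin N → Fin q)} {x : Fin N → Fin q}

theorem mono {C' : Finset (Fin N → Fin q)} (hC : IsTA t C) (h : C' ⊆ C) : IsTA t C' := by
  intro D hD ht w hw
  obtain ⟨c, hc, hlt⟩ := hC D (hD.trans h) ht w hw
  exact ⟨c, hc, fun y hy => hlt y (sdiff_subset_sdiff h Subset.rfl hy)⟩

theorem exists_card_agree_lt {d : Fin t → Fin N → Fin q} (hC : IsTA t C) (hd : ∀ j, d j ∈ C)
    (hx : x ∈ C) (hdx : ∀ j, d j ≠ x) {w : Fin N → Fin q} (hw : ∀ i, ∃ j, w i = d j i) :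
    ∃ j, #(agree w x) < #(agree w (d j)) := by
  have hdesc : w ∈ descSet (univ.image d) := fun i => by simpa using hw i
  obtain ⟨c, hc, hlt⟩ := hC (univ.image d) (by simpa [subset_iff] using hd)
    (card_image_le.trans_eq (card_fin t)) w hdesc
  obtain ⟨j, -, rfl⟩ := mem_image.1 hc
  have hdist := hlt x (by simp [hx, hdx])
  have hagree_x := card_agree_add_hammingDist w x
  have hagree_d := card_agree_add_hammingDist w (d j)
  exact ⟨j, by omega⟩

-- Otherwise the coordinates off `S` could be distributed among the `d j` so that each agrees with
-- the resulting descendant no more often than `x` does.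
theorem card_add_mul_lt_of_card_agree_le [NeZero t] {d : Fin t → Fin N → Fin q} (hC : IsTA t C)
    (hd : ∀ j, d j ∈ C) (hx : x ∈ C) (hdx : ∀ j, d j ≠ x) {S : Finset (Fin N)}
    {v : Fin N → Fin q} (hv : ∀ i ∈ S, ∃ j, v i = d j i) (hS : ∀ i ∉ S, Injective fun j => d j i)
    {u : ℕ} {r : Fin t → ℕ} (hu : u ≤ #(S ∩ agree v x)) (hr : ∀ j, #(S ∩ agree v (d j)) ≤ r j)
    (hru : ∀ j, r j ≤ u) : #S + t * u < N + ∑ j, r j := by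
  by_contra! hroom
  have hsum : ∑ j, (u - r j) + ∑ j, r j = t * u := by
    simp [← sum_add_distrib, Nat.sub_add_cancel (hru _)]
  have hcompl : #S + #Sᶜ = N := by simp [card_add_card_compl]
  obtain ⟨f, hf⟩ := exists_forall_card_filter_eq_le (R := Sᶜ) (r := fun j => u - r j) (by omega)
  let w : Fin N → Fin q := S.piecewise v fun i => d (f i) i
  have hwS {i} (hi : i ∈ S) : w i = v i := piecewise_eq_of_mem _ _ _ hi
  have hw_compl {i} (hi : i ∉ S) : w i = d (f i) i := piecewise_eq_of_notMem _ _ _ hi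
  obtain ⟨j, hj⟩ := hC.exists_card_agree_lt hd hx hdx (w := w) fun i => by
    by_cases hi : i ∈ S
    · exact hwS hi ▸ hv i hi
    · exact ⟨f i, hw_compl hi⟩
  have hwx : S ∩ agree v x ⊆ agree w x := fun i hi => by
    rw [mem_inter, mem_agree] at hi
    exact mem_agree.2 ((hwS hi.1).trans hi.2)
  have hwd : agree w (d j) ⊆ (S ∩ agree v (d j)) ∪ {i ∈ Sᶜ | f i = j} := fun i hi => by
    rw [mem_agree] at hi
    by_cases hiS : i ∈ S
    · exact mem_union_left _ (mem_inter.2 ⟨hiS, mem_agree.2 (hwS hiS ▸ hi)⟩)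
    · have hij : f i = j := hS i hiS ((hw_compl hiS).symm.trans hi)
      exact mem_union_right _ (mem_filter.2 ⟨mem_compl.2 hiS, hij⟩)
  have hcard_x := card_le_card hwx
  have hcard_d := (card_le_card hwd).trans (card_union_le _ _)
  have := hr j
  have := hru j
  have := hf j
  omega

theorem four_mul_card_union_agree_lt {a b c : Fin N → Fin q} (hC : IsTA 3 C) (hx : x ∈ C)
    (ha : a ∈ C) (hb : b ∈ C) (hc : c ∈ C) (hax : a ≠ x) (hbx : b ≠ x) (hcx : c ≠ x)
    {U P : Finset (Fin N)} (hU : U = agree a x ∪ agree b x ∪ agree c x)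
    (hP : P = agree b c \ U) (hab : agree a b ⊆ agree a x)
    (hac : agree a c ⊆ agree a x) (hbP : #(agree b x) + #P ≤ #U)
    (hcP : #(agree c x) + #P ≤ #U) :
    4 * #U < N + #(agree a x) + #(agree b x) + #(agree c x) + #P := by
  simp only [subset_iff, mem_agree] at hab hac
  have hmemU (i) : i ∈ U ↔ a i = x i ∨ b i = x i ∨ c i = x i := by simp [hU]
  have hmemP (i) : i ∈ P ↔ b i = c i ∧ i ∉ U := by simp [hP]
  have hdisj : Disjoint U P := hP ▸ disjoint_sdiff
  let v := U.piecewise x b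
  have hvU {i} (hi : i ∈ U) : v i = x i := piecewise_eq_of_mem _ _ _ hi
  have hvP {i} (hi : i ∉ U) : v i = b i := piecewise_eq_of_notMem _ _ _ hi
  have hv : ∀ i ∈ U ∪ P, ∃ j, v i = ![a, b, c] j i := fun i _ => by
    by_cases hiU : i ∈ U
    · rw [hvU hiU]
      rcases (hmemU i).1 hiU with hi | hi | hi
      exacts [⟨0, hi.symm⟩, ⟨1, hi.symm⟩, ⟨2, hi.symm⟩]
    · exact ⟨1, hvP hiU⟩
  have hdistinct : ∀ i ∉ U ∪ P, Injective fun j => ![a, b, c] j i := fun i hi => by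
    rw [mem_union, hmemU, hmemP, hmemU] at hi
    have hne : a i ≠ b i ∧ a i ≠ c i ∧ b i ≠ c i := by grind
    simp [Injective, Fin.forall_fin_succ, hne, hne.1.symm, hne.2.1.symm, hne.2.2.symm]
  have hx_load : U ⊆ (U ∪ P) ∩ agree v x := fun i hi =>
    mem_inter.2 ⟨mem_union_left _ hi, mem_agree.2 (hvU hi)⟩
  have ha_load : (U ∪ P) ∩ agree v a ⊆ agree a x := by grind [mem_agree]
  have hb_load : (U ∪ P) ∩ agree v b ⊆ agree b x ∪ P := by grind [mem_agree]
  have hc_load : (U ∪ P) ∩ agree v c ⊆ agree c x ∪ P := by grind [mem_agree]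
  have haU : agree a x ⊆ U := by grind
  have hlt := hC.card_add_mul_lt_of_card_agree_le (d := ![a, b, c])
    (r := ![#(agree a x), #(agree b x) + #P, #(agree c x) + #P])
    (by simp [Fin.forall_fin_succ, ha, hb, hc]) hx (by simp [Fin.forall_fin_succ, hax, hbx, hcx])
    hv hdistinct (card_le_card hx_load)
    (by simp [Fin.forall_fin_succ, card_le_card ha_load,
      (card_le_card hb_load).trans (card_union_le _ _),
      (card_le_card hc_load).trans (card_union_le _ _)])
    (by simp [Fin.forall_fin_succ, card_le_card haU, hbP, hcP])
  rw [card_union_of_disjoint hdisj, Fin.sum_univ_three] at hlt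
  simp only [Matrix.cons_val] at hlt
  omega

theorem four_mul_card_lt_of_isMaxHeavy {M : ℕ} (hM : 3 * N ≤ M) {b c : Fin N → Fin q}
    {A B E : Finset (Fin N)} (hC : IsTA 3 C) (hx : x ∈ C) (hA : IsMaxHeavy M C x A)
    (hB : IsMaxHeavy M C b B) (hE : IsMaxHeavy M C c E) (hBA : #B ≤ #A) (hEA : #E ≤ #A) :
    4 * #(A ∪ B ∩ agree b x ∪ E ∩ agree c x) < N + 3 * #A := by
  obtain ⟨d, hd⟩ := exists_forall_mem_fiber_agree_subset (κ := Fin 3) (C := C)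
    (y := ![x, b, c]) (T := ![A, B, E]) (by simpa using hM)
    (by simp [Fin.forall_fin_succ, hA, hB, hE]) x
  obtain ⟨ha, hax, ha_sub⟩ := hd 0
  obtain ⟨hb, hbx, hb_sub⟩ := hd 1
  obtain ⟨hc, hcx, hc_sub⟩ := hd 2
  simp only [Matrix.cons_val] at ha hax ha_sub hb hbx hb_sub hc hcx hc_sub
  have hagree_a : agree (d 0) x = A := by
    rw [agree_eq_inter_agree ha hax, agree_self, inter_univ]
  have hagree_b : agree (d 1) x = B ∩ agree b x := agree_eq_inter_agree hb hbx
  have hagree_c : agree (d 2) x = E ∩ agree c x := agree_eq_inter_agree hc hcx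
  rw [← hagree_b, ← hagree_c]
  set U := A ∪ agree (d 1) x ∪ agree (d 2) x with hU
  have hdisj {j} (hj : agree (d j) x ⊆ U) : Disjoint (agree (d j) x) (agree (d 1) (d 2) \ U) :=
    disjoint_sdiff.mono_left hj
  have hbP : #(agree (d 1) x) + #(agree (d 1) (d 2) \ U) ≤ #B := by
    rw [← card_union_of_disjoint (hdisj (by grind))]
    exact card_le_card (union_subset hbx (sdiff_subset.trans (hb_sub 2 (by decide))))
  have hcP : #(agree (d 2) x) + #(agree (d 1) (d 2) \ U) ≤ #E := by
    rw [← card_union_of_disjoint (hdisj (by grind)), agree_comm (d 1)]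
    exact card_le_card (union_subset hcx (sdiff_subset.trans (hc_sub 1 (by decide))))
  have hAU : #A ≤ #U := card_le_card (by grind)
  have hlt := hC.four_mul_card_union_agree_lt hx (fiber_subset ha) (fiber_subset hb)
    (fiber_subset hc) (ne_of_agree_subset hax hA.isHeavy.ne_univ)
    (ne_of_agree_subset hbx hB.isHeavy.ne_univ) (ne_of_agree_subset hcx hE.isHeavy.ne_univ)
    (hagree_a ▸ hU) rfl
    (hagree_a ▸ ha_sub 1 (by decide)) (hagree_a ▸ ha_sub 2 (by decide)) (by omega) (by omega)
  rw [hagree_a] at hlt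
  omega

theorem exists_card_fiber_le {k : ℕ} (hN : 0 < N) (hk : k ≤ N) (hkN : N ≤ 9 * k)
    (hC : IsTA 3 C) (hne : C.Nonempty) :
    ∃ x ∈ C, ∃ S, #S = k ∧ #(fiber C x S) ≤ (3 * N) ^ N := by
  by_contra! hlarge
  have hM : 0 < 3 * N := by omega
  have hkN' : k ≤ Fintype.card (Fin N) := by simpa using hk
  obtain ⟨x₀, hx₀⟩ := hne
  obtain ⟨S, hS, -⟩ := exists_card_eq_min_le_card_union hkN' ∅
  obtain ⟨x, hx, A, -, hA, hAmax⟩ := (isHeavy_of_pow_card_lt hM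
    (by simpa using hlarge x₀ hx₀ S hS) (empty_subset S) hx₀).exists_isMaxHeavy hx₀
  simp only [fiber_empty] at hx hAmax
  have hlarge_x : ∀ S, #S = k → (3 * N) ^ Fintype.card (Fin N) < #(fiber C x S) := by
    simpa using hlarge x hx
  have hkA : k ≤ #A := hS ▸ hAmax x hx S (empty_subset S)
    (isHeavy_of_pow_card_lt hM (hlarge_x S hS) Subset.rfl hx)
  obtain ⟨b, hb, B, hB, hAB⟩ := exists_isMaxHeavy_min_le_card_union hM hkN' hx hlarge_x A
  obtain ⟨c, hc, E, hE, hABE⟩ :=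
    exists_isMaxHeavy_min_le_card_union hM hkN' hx hlarge_x (A ∪ B ∩ agree b x)
  have hlt := hC.four_mul_card_lt_of_isMaxHeavy le_rfl hx hA hB hE
    (hAmax b hb B (empty_subset B) hB.isHeavy) (hAmax c hc E (empty_subset E) hE.isHeavy)
  have hAN : #A ≤ N := card_finset_fin_le A
  rw [Fintype.card_fin] at hAB hABE
  omega

end IsTA

/-- For every positive integer `N` there is a constant `c` (depending only on `N`)
such that for every alphabet size `q`, every `q`-ary 3-traceability code of length
`N` has at most `c·q^⌈N/9⌉` codewords. -/
theorem stmt_7 (N : ℕ) (hN : 1 ≤ N) :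
    ∃ c : ℕ, ∀ q : ℕ, ∀ C : Finset (Fin N → Fin q),
      IsTA 3 C → C.card ≤ c * q ^ (N ⌈/⌉ 9) := by
  set k := N ⌈/⌉ 9
  have hk : k = (N + 8) / 9 := Nat.ceilDiv_eq_add_pred_div _ _
  refine ⟨(3 * N) ^ N * N.choose k, fun q C hC => ?_⟩
  by_contra! hlarge
  obtain ⟨C', hC'C, hne, hC'⟩ := exists_subset_lt_card_fiber (C := C) (K := (3 * N) ^ N)
    (𝒮 := powersetCard k univ) (by
      rw [sum_congr rfl fun S hS => by rw [(mem_powersetCard.1 hS).2]]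
      simpa [mul_assoc] using hlarge)
  obtain ⟨x, hx, S, hS, hle⟩ :=
    (hC.mono hC'C).exists_card_fiber_le (k := k) hN (by omega) (by omega) hne
  exact hle.not_gt (hC' x hx S (mem_powersetCard.2 ⟨subset_univ S, hS⟩))
end

section
/- Let C be a code of length N over an alphabet of size q, and let V₁, …, V_m be a partition of the coordinate set [N] into m nonempty parts. If |C| > Σ_{i=1}^m q^{|V_i|}, then there exists a nonempty subset Ĉ ⊆ C such that for every codeword x ∈ Ĉ and every 1 ≤ i ≤ m there exists a codeword y ∈ Ĉ with y ≠ x and y agreeing with x on all coordinates of V_i (i.e., no codeword of Ĉ has a private pattern with support set V_i). -/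
/-!
Take a minimal subcode `D ⊆ C` having fewer patterns than codewords, in the sense that
`∑ i, #{x|_Vᵢ : x ∈ D} < #D`. Deleting a codeword with a private pattern would lower the left-hand
side by at least one and the right-hand side by exactly one, so `D` has no private patterns.
-/

section PrivateValue

variable {α β : Type*}

/-- `x` has a *private value* under `f` with respect to `s`: no other element of `s` has the same
image. A private pattern `x|_V` is a private value under the restriction map to `V`. Membership
`x ∈ s` is not part of the definition. -/
def HasPrivateValue (s : Finset α) (f : α → β) (x : α) : Prop :=
  ∀ y ∈ s, f y = f x → y = x

theorem not_hasPrivateValue_iff {s : Finset α} {f : α → β} {x : α} :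
    ¬ HasPrivateValue s f x ↔ ∃ y ∈ s, y ≠ x ∧ f y = f x := by
  simp only [HasPrivateValue, not_forall, exists_prop, ne_eq, and_comm]

theorem HasPrivateValue.notMem_image_erase [DecidableEq α] [DecidableEq β] {s : Finset α}
    {f : α → β} {x : α} (hpriv : HasPrivateValue s f x) : f x ∉ (s.erase x).image f := by
  intro hmem
  obtain ⟨y, hy, hyx⟩ := Finset.mem_image.mp hmem
  exact Finset.ne_of_mem_erase hy (hpriv y (Finset.mem_of_mem_erase hy) hyx)

theorem HasPrivateValue.card_image_erase_lt [DecidableEq α] [DecidableEq β] {s : Finset α}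
    {f : α → β} {x : α} (hpriv : HasPrivateValue s f x) (hx : x ∈ s) :
    ((s.erase x).image f).card < (s.image f).card :=
  Finset.card_lt_card <|
    (Finset.ssubset_iff_of_subset (Finset.image_subset_image (Finset.erase_subset x s))).mpr
      ⟨f x, Finset.mem_image_of_mem f hx, hpriv.notMem_image_erase⟩

end PrivateValue

section Family

variable {ι α : Type*} [Fintype ι] {β : ι → Type*} [∀ i, DecidableEq (β i)]

theorem HasPrivateValue.sum_card_image_erase_lt [DecidableEq α] {s : Finset α}
    {f : ∀ i, α → β i} {x : α} {i : ι} (hpriv : HasPrivateValue s (f i) x) (hx : x ∈ s) :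
    ∑ k, ((s.erase x).image (f k)).card < ∑ k, (s.image (f k)).card :=
  Finset.sum_lt_sum
    (fun _ _ => Finset.card_le_card (Finset.image_subset_image (Finset.erase_subset x s)))
    ⟨i, Finset.mem_univ i, hpriv.card_image_erase_lt hx⟩

theorem exists_subset_forall_not_hasPrivateValue (f : ∀ i, α → β i) {C : Finset α}
    (hC : ∑ i, (C.image (f i)).card < C.card) :
    ∃ D ⊆ C, D.Nonempty ∧ ∀ x ∈ D, ∀ i, ¬ HasPrivateValue D (f i) x := by
  classical
  obtain ⟨D, hDC, hmin⟩ := exists_minimal_le_of_wellFoundedLT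
    (fun D : Finset α => ∑ i, (D.image (f i)).card < D.card) C hC
  refine ⟨D, hDC, Finset.card_pos.mp (Nat.zero_lt_of_lt hmin.prop), fun x hx i hpriv => ?_⟩
  refine hmin.not_prop_of_lt (Finset.erase_ssubset hx) ?_
  have hsum := hpriv.sum_card_image_erase_lt hx
  have hcard := Finset.card_erase_add_one hx
  have hlt := hmin.prop
  omega

end Family

section Code

variable {κ : Type*} {A : κ → Type*} [∀ j, Fintype (A j)]

theorem card_image_restrict_le_prod (C : Finset (∀ j, A j)) (V : Finset κ)
    [DecidableEq (∀ j : V, A j)] : (C.image V.restrict).card ≤ ∏ j ∈ V, Fintype.card (A j) := by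
  classical
  calc (C.image V.restrict).card
      ≤ Fintype.card (∀ j : V, A j) := Finset.card_le_univ _
    _ = ∏ j : V, Fintype.card (A j) := Fintype.card_pi
    _ = ∏ j ∈ V, Fintype.card (A j) := Finset.prod_coe_sort V fun j => Fintype.card (A j)

theorem stmt_10_general {ι : Type*} [Fintype ι] (V : ι → Finset κ) (C : Finset (∀ j, A j))
    (hcard : ∑ i, ∏ j ∈ V i, Fintype.card (A j) < C.card) :
    ∃ Chat ⊆ C, Chat.Nonempty ∧
      ∀ x ∈ Chat, ∀ i, ∃ y ∈ Chat, y ≠ x ∧ ∀ j ∈ V i, y j = x j := by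
  classical
  have hpatterns : ∑ i, (C.image (V i).restrict).card < C.card :=
    (Finset.sum_le_sum fun i _ => card_image_restrict_le_prod C (V i)).trans_lt hcard
  obtain ⟨D, hDC, hD, hpriv⟩ :=
    exists_subset_forall_not_hasPrivateValue (fun i => (V i).restrict) hpatterns
  refine ⟨D, hDC, hD, fun x hx i => ?_⟩
  obtain ⟨y, hy, hyx, hpattern⟩ := not_hasPrivateValue_iff.mp (hpriv x hx i)
  exact ⟨y, hy, hyx, fun j hj => congrFun hpattern ⟨j, hj⟩⟩

end Code

/-- Let `C` be a code of length `N` over an alphabet of size `q` and let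
`V 0, …, V (m-1)` be a partition of the coordinate set into `m` nonempty parts. If
`|C| > Σᵢ q^{|Vᵢ|}`, then there is a nonempty subset `Ĉ ⊆ C` in which no codeword has
a private pattern with support any part `Vᵢ`: every `x ∈ Ĉ` agrees on all of `Vᵢ`
with some other codeword `y ∈ Ĉ`. -/
theorem stmt_10 (N q m : ℕ) (V : Fin m → Finset (Fin N))
    (hne : ∀ i, (V i).Nonempty)
    (hdisj : ∀ i j, i ≠ j → Disjoint (V i) (V j))
    (hcover : ∀ j : Fin N, ∃ i, j ∈ V i)
    (C : Finset (Fin N → Fin q))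
    (hcard : ∑ i : Fin m, q ^ (V i).card < C.card) :
    ∃ Chat ⊆ C, Chat.Nonempty ∧
      ∀ x ∈ Chat, ∀ i : Fin m, ∃ y ∈ Chat, y ≠ x ∧ ∀ j ∈ V i, y j = x j := by
  refine stmt_10_general V C ?_
  simpa only [Fintype.card_fin, Finset.prod_const] using hcard
end

section
/- Let t ≥ 2, N ≥ 1, and let r ∈ {0, …, t−1} be the integer with r ≡ N (mod t). Then every q-ary t-frameproof code of length N has at most max{ q^⌈N/t⌉, r·(q^⌈N/t⌉ − 1) + (t−r)·(q^⌊N/t⌋ − 1) } codewords; that is, M_FP(N,q,t) ≤ max{ q^⌈N/t⌉, r(q^⌈N/t⌉−1) + (t−r)(q^⌊N/t⌋−1) }. -/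
section DeterminedOn

open Finset

variable {ι : Type*} {α : ι → Type*} {C : Finset (∀ i, α i)} {S : Finset ι}

open Classical in
/-- The codewords of `C` that no other codeword of `C` agrees with on the coordinates in `S`, i.e.
those whose restriction to `S` is an *own subword* in the terminology of frameproof codes. -/
noncomputable def determinedOn (C : Finset (∀ i, α i)) (S : Finset ι) : Finset (∀ i, α i) :=
  {c ∈ C | ∀ d ∈ C, S.restrict d = S.restrict c → d = c}

theorem mem_determinedOn {c : ∀ i, α i} :
    c ∈ determinedOn C S ↔ c ∈ C ∧ ∀ d ∈ C, S.restrict d = S.restrict c → d = c := by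
  simp only [determinedOn, mem_filter]

theorem determinedOn_subset : determinedOn C S ⊆ C :=
  fun _ hc => (mem_determinedOn.1 hc).1

theorem injOn_restrict_determinedOn : Set.InjOn S.restrict (determinedOn C S : Set (∀ i, α i)) :=
  fun _ hc _ hd hcd => (mem_determinedOn.1 hd).2 _ (determinedOn_subset hc) hcd

variable [∀ i, Fintype (α i)]

theorem card_determinedOn_le : #(determinedOn C S) ≤ ∏ i ∈ S, Fintype.card (α i) := by
  classical
  calc #(determinedOn C S) = #((determinedOn C S).image S.restrict) :=
        (card_image_of_injOn injOn_restrict_determinedOn).symm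
    _ ≤ Fintype.card (∀ i : S, α i) := card_le_univ _
    _ = ∏ i ∈ S, Fintype.card (α i) := by
        rw [Fintype.card_pi, prod_coe_sort S fun i => Fintype.card (α i)]

theorem card_determinedOn_lt (h : ¬ C ⊆ determinedOn C S) :
    #(determinedOn C S) < ∏ i ∈ S, Fintype.card (α i) := by
  classical
  obtain ⟨c, hcC, hc⟩ := not_subset.1 h
  have c_missed : S.restrict c ∉ (determinedOn C S).image S.restrict := by
    intro hmem
    obtain ⟨d, hd, hdc⟩ := mem_image.1 hmem
    obtain rfl := (mem_determinedOn.1 hd).2 c hcC hdc.symm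
    exact hc hd
  calc #(determinedOn C S) = #((determinedOn C S).image S.restrict) :=
        (card_image_of_injOn injOn_restrict_determinedOn).symm
    _ < Fintype.card (∀ i : S, α i) := card_lt_univ_of_notMem c_missed
    _ = ∏ i ∈ S, Fintype.card (α i) := by
        rw [Fintype.card_pi, prod_coe_sort S fun i => Fintype.card (α i)]

theorem card_le_prod_or_card_le_sum_of_forall_mem_determinedOn {κ : Type*} [Fintype κ]
    {S : κ → Finset ι} (hC : ∀ c ∈ C, ∃ j, c ∈ determinedOn C (S j)) :
    (∃ j, #C ≤ ∏ i ∈ S j, Fintype.card (α i)) ∨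
      #C ≤ ∑ j, (∏ i ∈ S j, Fintype.card (α i) - 1) := by
  classical
  by_cases h : ∃ j, C ⊆ determinedOn C (S j)
  · obtain ⟨j, hj⟩ := h
    exact .inl ⟨j, (card_le_card hj).trans card_determinedOn_le⟩
  · push Not at h
    have hcover : C ⊆ univ.biUnion fun j => determinedOn C (S j) := fun c hc => by
      simpa using hC c hc
    right
    calc #C ≤ ∑ j, #(determinedOn C (S j)) := (card_le_card hcover).trans card_biUnion_le
      _ ≤ ∑ j, (∏ i ∈ S j, Fintype.card (α i) - 1) := sum_le_sum fun j _ =>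
          Nat.le_sub_one_of_lt (card_determinedOn_lt (h j))

end DeterminedOn

namespace IsFrameproof

open Finset

variable {N q t : ℕ} {C : Finset (Fin N → Fin q)} {κ : Type*} [Fintype κ] {S : κ → Finset (Fin N)}

theorem exists_mem_determinedOn (hC : IsFrameproof t C) (hκ : Fintype.card κ ≤ t)
    (hS : ∀ i, ∃ j, i ∈ S j) {c : Fin N → Fin q} (hc : c ∈ C) :
    ∃ j, c ∈ determinedOn C (S j) := by
  by_contra! hundetermined
  have hcompetitor : ∀ j, ∃ d ∈ C, (S j).restrict d = (S j).restrict c ∧ d ≠ c := by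
    simpa [mem_determinedOn, hc] using hundetermined
  choose d hdC hdc hne using hcompetitor
  have hdesc : c ∈ descSet (univ.image d) := fun i => by
    obtain ⟨j, hij⟩ := hS i
    exact ⟨d j, mem_image_of_mem d (mem_univ j), (congrFun (hdc j) ⟨i, hij⟩).symm⟩
  have hframe := hC (univ.image d) (by simpa [image_subset_iff] using hdC)
    (card_image_le.trans hκ)
  have hmem : c ∈ univ.image d := mem_coe.1 (hframe ▸ ⟨hdesc, mem_coe.2 hc⟩)
  obtain ⟨j, -, hj⟩ := mem_image.1 hmem
  exact hne j hj

theorem card_le_pow_or_card_le_sum (hC : IsFrameproof t C) (hκ : Fintype.card κ ≤ t)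
    (hS : ∀ i, ∃ j, i ∈ S j) :
    (∃ j, #C ≤ q ^ #(S j)) ∨ #C ≤ ∑ j, (q ^ #(S j) - 1) := by
  simpa only [Fintype.card_fin, prod_const] using
    card_le_prod_or_card_le_sum_of_forall_mem_determinedOn
      fun _ hc => hC.exists_mem_determinedOn hκ hS hc

end IsFrameproof

section ResidueClasses

open Finset

theorem ceilDiv_eq_div_add_ite {t : ℕ} (ht : 0 < t) (N : ℕ) :
    N ⌈/⌉ t = N / t + if 0 < N % t then 1 else 0 := by
  have hpred : t - 1 < t := Nat.sub_one_lt_of_lt ht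
  rw [Nat.ceilDiv_eq_add_pred_div, Nat.add_sub_assoc ht, Nat.add_div ht, Nat.div_eq_of_lt hpred,
    Nat.mod_eq_of_lt hpred, add_zero]
  have hcarry : t ≤ N % t + (t - 1) ↔ 0 < N % t := by omega
  simp only [hcarry]

theorem card_filter_val_mod_eq {N t j : ℕ} (hj : j < t) :
    #{i : Fin N | i.val % t = j} = if j < N % t then N ⌈/⌉ t else N / t := by
  have ht : 0 < t := by omega
  have hcount : #{i : Fin N | i.val % t = j} = N.count (· ≡ j [MOD t]) := by
    simp only [Nat.count_eq_card_filter_range, card_filter, Nat.ModEq, Nat.mod_eq_of_lt hj]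
    exact Fin.sum_univ_eq_sum_range (fun i => if i % t = j then 1 else 0) N
  rw [hcount, Nat.count_modEq_card N ht, Nat.mod_eq_of_lt hj, ceilDiv_eq_div_add_ite ht]
  split_ifs <;> omega

theorem sum_fin_ite_val_lt {M : Type*} [AddCommMonoid M] {r t : ℕ} (hr : r ≤ t) (a b : M) :
    ∑ j : Fin t, (if j.val < r then a else b) = r • a + (t - r) • b := by
  obtain ⟨s, rfl⟩ := Nat.exists_eq_add_of_le hr
  simp [Fin.sum_univ_add]

end ResidueClasses

/-- Blackburn's bound: let `t ≥ 2`, `N ≥ 1` and `r ≡ N (mod t)`, `0 ≤ r ≤ t−1`.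
Then every `q`-ary `t`-frameproof code of length `N` has at most
`max{q^⌈N/t⌉, r(q^⌈N/t⌉−1) + (t−r)(q^⌊N/t⌋−1)}` codewords. -/
theorem stmt_13 (N q t r : ℕ) (ht : 2 ≤ t) (hN : 1 ≤ N) (hr : r = N % t)
    (C : Finset (Fin N → Fin q)) (hC : IsFrameproof t C) :
    C.card ≤ max (q ^ (N ⌈/⌉ t))
      (r * (q ^ (N ⌈/⌉ t) - 1) + (t - r) * (q ^ (N / t) - 1)) := by
  obtain rfl | ⟨c, -⟩ := C.eq_empty_or_nonempty
  · simp
  have hq : 0 < q := Fin.pos (c ⟨0, hN⟩)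
  have ht0 : 0 < t := by omega
  subst hr
  let S (j : Fin t) : Finset (Fin N) := {i | i.val % t = j}
  have hS (i : Fin N) : ∃ j, i ∈ S j := ⟨⟨i % t, Nat.mod_lt _ ht0⟩, by simp [S]⟩
  have hcard (j : Fin t) : (S j).card = if j.val < N % t then N ⌈/⌉ t else N / t :=
    card_filter_val_mod_eq j.isLt
  obtain ⟨j, hj⟩ | hsum := hC.card_le_pow_or_card_le_sum (Fintype.card_fin t).le hS
  · have hle : (S j).card ≤ N ⌈/⌉ t := by
      rw [hcard]
      split_ifs
      exacts [le_rfl, floorDiv_le_ceilDiv (a := t) (b := N)]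
    exact le_max_of_le_left (hj.trans (Nat.pow_le_pow_right hq hle))
  · refine le_max_of_le_right (hsum.trans_eq ?_)
    rw [← smul_eq_mul, ← smul_eq_mul, ← sum_fin_ite_val_lt (Nat.mod_lt N ht0).le]
    exact Finset.sum_congr rfl fun j _ => by rw [hcard]; split_ifs <;> rfl
end

section
/- For every integer t ≥ 3 and every integer N with t+1 ≤ N ≤ 3t, every binary t-frameproof code of length N has at most N codewords; that is, M_FP(N,2,t) ≤ N. -/
/-!
Say that a coordinate isolates a set of words of `Q` if these words are exactly the ones showing
one of the two symbols there. For `5 ≤ #Q` a coordinate isolates at most one set of at most two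
words, so at most `N` such sets are isolated. Call a word of `Q` covered if no coordinate isolates
it alone, that is, if it is a descendant of the remaining words. In a `t`-frameproof code a set of
at most `t + 1` words has no covered word. By induction on `#Q`, every `Q` with `t + 2 ≤ #Q` has
at most one: a covered word `x` stays covered after deleting `e` unless `{x, e}` is isolated, so
the induction hypothesis forces many isolated pairs. If `Q` has three or more covered words (or
two, when `#Q = t + 2`), there are more than `3 * t` isolated sets. If exactly `c` and `d` are
covered, the other words isolate at least `#Q - 2` coordinates at which `c` and `d` agree, and the
remaining coordinates are too few to prevent small sets having `c` or `d` as a descendant.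

Hence, if `N < #C`, exactly `N` words of `C` are isolated alone and they use up all coordinates. At
each coordinate the one covered word then agrees with all but one of the other words, so it is a
descendant of any two of them.
-/

section Frameproof

open Finset

section Transversal

variable {ι α : Type*} {M : Finset ι} {U : Finset α} {r : ι → α → Prop}

lemma exists_transversal_card_le (h : ∀ i ∈ M, ∃ x ∈ U, r i x) :
    ∃ D ⊆ U, #D ≤ #M ∧ ∀ i ∈ M, ∃ x ∈ D, r i x := by
  classical
  choose f hfU hfr using h
  refine ⟨M.attach.image fun i ↦ f i.1 i.2, ?_, card_image_le.trans_eq M.card_attach, ?_⟩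
  · exact image_subset_iff.2 fun i _ ↦ hfU i.1 i.2
  · exact fun i hi ↦ ⟨f i hi, mem_image_of_mem _ (mem_attach M ⟨i, hi⟩), hfr i hi⟩

open Classical in
lemma exists_transversal_card_le_card_filter_add_one {x : α} (hx : x ∈ U)
    (h : ∀ i ∈ M, ∃ y ∈ U, r i y) :
    ∃ D ⊆ U, #D ≤ #{i ∈ M | ¬ r i x} + 1 ∧ ∀ i ∈ M, ∃ y ∈ D, r i y := by
  obtain ⟨D, hDU, hDcard, hD⟩ := exists_transversal_card_le (M := {i ∈ M | ¬ r i x})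
    fun i hi ↦ h i (mem_of_mem_filter i hi)
  refine ⟨insert x D, insert_subset hx hDU, (card_insert_le x D).trans (by gcongr), fun i hi ↦ ?_⟩
  by_cases hix : r i x
  · exact ⟨x, mem_insert_self x D, hix⟩
  · obtain ⟨y, hy, hiy⟩ := hD i (mem_filter.2 ⟨hi, hix⟩)
    exact ⟨y, mem_insert_of_mem hy, hiy⟩

/- Start both transversals with `x₀` and add one point per index that `x₀` misses. This costs
`#M + 2`; the index `i₀` is saved because any second point of `D'` takes care of it. -/
lemma exists_transversal_pair_card_add_card_le {i₀ : ι} {x₀ : α}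
    (h : ∀ i ∈ M, ∃ x ∈ U, r i x) (h' : ∀ i ∈ M, ∃ x ∈ U, ¬ r i x)
    (hi₀ : i₀ ∈ M) (hx₀ : ∀ x ∈ U, r i₀ x → x = x₀) :
    ∃ D ⊆ U, ∃ D' ⊆ U, (∀ i ∈ M, ∃ x ∈ D, r i x) ∧ (∀ i ∈ M, ∃ x ∈ D', ¬ r i x) ∧
      (#D' ≤ 2 ∨ #D + #D' ≤ #M + 1) := by
  classical
  obtain ⟨x, hxU, hrx⟩ := h i₀ hi₀
  obtain rfl : x = x₀ := hx₀ x hxU hrx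
  obtain ⟨D, hDU, hDcard, hD⟩ := exists_transversal_card_le_card_filter_add_one hxU h
  by_cases hj : ∃ j ∈ M.erase i₀, r j x
  · obtain ⟨j, hjM, hjx⟩ := hj
    obtain ⟨D', hDU', hDcard', hD'⟩ := exists_transversal_card_le_card_filter_add_one hxU
      fun i (hi : i ∈ M.erase i₀) ↦ h' i (mem_of_mem_erase hi)
    refine ⟨D, hDU, D', hDU', hD, fun i hi ↦ ?_, .inr ?_⟩
    · obtain rfl | hii₀ := eq_or_ne i i₀
      · obtain ⟨y, hy, hjy⟩ := hD' j hjM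
        refine ⟨y, hy, fun hiy ↦ hjy ?_⟩
        rwa [hx₀ y (hDU' hy) hiy]
      · exact hD' i (mem_erase.2 ⟨hii₀, hi⟩)
    · simp only [not_not, filter_erase] at hDcard'
      have := card_erase_add_one (mem_filter.2 ⟨hi₀, hrx⟩ : i₀ ∈ ({i ∈ M | r i x} : Finset ι))
      have := card_filter_add_card_filter_not (s := M) fun i ↦ r i x
      omega
  · obtain ⟨D', hDU', hDcard', hD'⟩ := exists_transversal_card_le_card_filter_add_one hxU h'
    simp only [not_not] at hDcard'
    have hsub : ({i ∈ M | r i x} : Finset ι) ⊆ {i₀} := fun i hi ↦ by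
      obtain ⟨hiM, hix⟩ := mem_filter.1 hi
      by_contra hii₀
      exact hj ⟨i, mem_erase.2 ⟨by simpa using hii₀, hiM⟩, hix⟩
    have := (card_le_card hsub).trans_eq (card_singleton i₀)
    exact ⟨D, hDU, D', hDU', hD, hD', .inl (by omega)⟩

end Transversal

lemma choose_succ_two (n : ℕ) : (n + 1).choose 2 = n + n.choose 2 := by
  rw [Nat.choose_succ_succ', Nat.choose_one_right]

lemma choose_two_add_le_choose_two_add {u v : ℕ} (hv : 3 ≤ v) (huv : u ≤ v) :
    u.choose 2 + v ≤ v.choose 2 + u := by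
  induction v, hv using Nat.le_induction with
  | base => interval_cases u <;> decide
  | succ v hv ih =>
    obtain rfl | hlt := huv.eq_or_lt
    · exact le_rfl
    · have := ih (Nat.lt_succ_iff.1 hlt)
      rw [choose_succ_two]
      omega

section CoveredWords

variable {N q t : ℕ}

lemma IsFrameproof.lt_card_of_mem_descSet {C D : Finset (Fin N → Fin q)} {x : Fin N → Fin q}
    (hC : IsFrameproof t C) (hD : D ⊆ C) (hx : x ∈ C) (hxD : x ∉ D) (hdesc : x ∈ descSet D) :
    t < #D := by
  by_contra! hcard
  have hmem : x ∈ descSet D ∩ (C : Set (Fin N → Fin q)) := ⟨hdesc, hx⟩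
  rw [hC D hD hcard] at hmem
  exact hxD hmem

open Classical in
/-- The words of `Q` that are descendants of the other words of `Q`; equivalently, the words having
no own coordinate in `Q`, one at which they differ from all other words of `Q`. -/
noncomputable def coveredWords (Q : Finset (Fin N → Fin q)) : Finset (Fin N → Fin q) :=
  {x ∈ Q | x ∈ descSet (Q.erase x)}

lemma mem_coveredWords {Q : Finset (Fin N → Fin q)} {x : Fin N → Fin q} :
    x ∈ coveredWords Q ↔ x ∈ Q ∧ x ∈ descSet (Q.erase x) := by
  simp only [coveredWords, mem_filter]

lemma coveredWords_subset (Q : Finset (Fin N → Fin q)) : coveredWords Q ⊆ Q :=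
  fun _ hx ↦ (mem_coveredWords.1 hx).1

lemma IsFrameproof.coveredWords_eq_empty {C Q : Finset (Fin N → Fin q)} (hC : IsFrameproof t C)
    (hQC : Q ⊆ C) (hQ : #Q ≤ t + 1) : coveredWords Q = ∅ := by
  refine eq_empty_of_forall_notMem fun x hx ↦ ?_
  obtain ⟨hxQ, hdesc⟩ := mem_coveredWords.1 hx
  have hlt := hC.lt_card_of_mem_descSet ((erase_subset x Q).trans hQC) (hQC hxQ)
    (notMem_erase x Q) hdesc
  have := card_erase_add_one hxQ
  omega

end CoveredWords

section Isolates

variable {N : ℕ} {Q : Finset (Fin N → Fin 2)} {i : Fin N} {z w : Sym2 (Fin N → Fin 2)}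
  {x y e v : Fin N → Fin 2}

/-- Coordinate `i` isolates the unordered pair `z` in `Q`: one of the two symbols is shown at `i` by
the words of `z` and by no other word of `Q`. The diagonal pair `s(x, x)` stands for the single word
`x`, so that sets of one and of two words are treated together. -/
def Isolates (Q : Finset (Fin N → Fin 2)) (i : Fin N) (z : Sym2 (Fin N → Fin 2)) : Prop :=
  ∃ s : Fin 2, ∀ x ∈ Q, x i = s ↔ x ∈ z

lemma Isolates.apply_eq_iff (h : Isolates Q i z) (hx : x ∈ Q) (hxz : x ∈ z) (hy : y ∈ Q) :
    y i = x i ↔ y ∈ z := by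
  obtain ⟨s, hs⟩ := h
  rw [(hs x hx).2 hxz, hs y hy]

lemma Isolates.apply_eq_of_notMem (h : Isolates Q i z) (hx : x ∈ Q) (hxz : x ∉ z) (hy : y ∈ Q)
    (hyz : y ∉ z) : x i = y i := by
  obtain ⟨s, hs⟩ := h
  have := mt (hs x hx).1 hxz
  have := mt (hs y hy).1 hyz
  omega

lemma Isolates.eq (hQ : #z.toFinset + #w.toFinset < #Q) (hzQ : z ∈ Q.sym2) (hwQ : w ∈ Q.sym2)
    (hz : Isolates Q i z) (hw : Isolates Q i w) : z = w := by
  rw [mem_sym2_iff] at hzQ hwQ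
  obtain ⟨s, hs⟩ := hz
  obtain ⟨s', hs'⟩ := hw
  obtain rfl | hne := eq_or_ne s s'
  · exact Sym2.ext fun x ↦ ⟨fun hx ↦ (hs' x (hzQ x hx)).1 ((hs x (hzQ x hx)).2 hx),
      fun hx ↦ (hs x (hwQ x hx)).1 ((hs' x (hwQ x hx)).2 hx)⟩
  · have hsub : Q ⊆ z.toFinset ∪ w.toFinset := fun x hx ↦ by
      rw [mem_union, Sym2.mem_toFinset, Sym2.mem_toFinset, ← hs x hx, ← hs' x hx]
      omega
    exact absurd ((card_le_card hsub).trans (card_union_le _ _)) hQ.not_ge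

lemma card_le_card_of_forall_isolates {k : ℕ} (hQ : 2 * k < #Q)
    {F : Finset (Sym2 (Fin N → Fin 2))} (hF : F ⊆ Q.sym2) (hk : ∀ z ∈ F, #z.toFinset ≤ k)
    {T : Finset (Fin N)} (hT : ∀ z ∈ F, ∃ i ∈ T, Isolates Q i z) : #F ≤ #T :=
  card_le_card_of_forall_subsingleton (fun z i ↦ Isolates Q i z) hT fun _ _ z hz w hw ↦
    Isolates.eq (by have := hk z hz.1; have := hk w hw.1; omega) (hF hz.1) (hF hw.1) hz.2 hw.2

lemma mem_coveredWords_iff_forall_not_isolates (hx : x ∈ Q) :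
    x ∈ coveredWords Q ↔ ∀ i, ¬ Isolates Q i s(x, x) := by
  rw [mem_coveredWords, and_iff_right hx]
  refine forall_congr' fun i ↦ ⟨?_, fun h ↦ ?_⟩
  · rintro ⟨y, hy, hxy⟩ h
    have := (h.apply_eq_iff hx (Sym2.mem_mk_left x x) (mem_of_mem_erase hy)).1 hxy.symm
    exact ne_of_mem_erase hy (by simpa using this)
  · contrapose! h
    refine ⟨x i, fun y hy ↦ ⟨fun hyx ↦ ?_, fun hyx ↦ ?_⟩⟩
    · by_contra hne
      exact h y (mem_erase.2 ⟨by simpa using hne, hy⟩) hyx.symm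
    · rw [show y = x by simpa using hyx]

lemma notMem_of_isolates_diag (hy : y ∈ coveredWords Q) (hi : Isolates Q i s(x, x)) :
    y ∉ s(x, x) := by
  rw [Sym2.mem_iff, or_self]
  rintro rfl
  exact (mem_coveredWords_iff_forall_not_isolates (coveredWords_subset Q hy)).1 hy i hi

lemma apply_eq_of_isolates_diag (hx : x ∈ coveredWords Q) (hy : y ∈ coveredWords Q)
    (hi : Isolates Q i s(e, e)) : x i = y i :=
  hi.apply_eq_of_notMem (coveredWords_subset Q hx) (notMem_of_isolates_diag hx hi)
    (coveredWords_subset Q hy) (notMem_of_isolates_diag hy hi)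

lemma exists_isolates_diag_of_notMem_coveredWords (hx : x ∈ Q) (hxc : x ∉ coveredWords Q) :
    ∃ i, Isolates Q i s(x, x) := by
  simpa using mt (mem_coveredWords_iff_forall_not_isolates hx).2 hxc

open Classical in
lemma card_le_card_coveredWords_add (hQ : 3 ≤ #Q) :
    #Q ≤ #(coveredWords Q) + #{i | ∃ x, Isolates Q i s(x, x)} := by
  have himage : #((Q \ coveredWords Q).image Sym2.diag) ≤ #{i | ∃ x, Isolates Q i s(x, x)} := by
    refine card_le_card_of_forall_isolates (Q := Q) (k := 1) (by omega)
      (image_subset_iff.2 fun x hx ↦ ?_) (forall_mem_image.2 fun x _ ↦ ?_)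
      (forall_mem_image.2 fun x hx ↦ ?_)
    · exact diag_mem_sym2_iff.2 (mem_sdiff.1 hx).1
    · exact (Sym2.card_toFinset_of_isDiag _ (Sym2.diag_isDiag x)).le
    · obtain ⟨hxQ, hxc⟩ := mem_sdiff.1 hx
      obtain ⟨i, hi⟩ := exists_isolates_diag_of_notMem_coveredWords hxQ hxc
      exact ⟨i, mem_filter.2 ⟨mem_univ i, x, hi⟩, hi⟩
  rw [card_image_of_injective _ Sym2.diag_injective] at himage
  have := card_sdiff_add_card_eq_card (coveredWords_subset Q)
  omega

lemma mem_coveredWords_erase (hx : x ∈ coveredWords Q) (hxe : x ≠ e)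
    (hpair : ∀ i, ¬ Isolates Q i s(x, e)) : x ∈ coveredWords (Q.erase e) := by
  have hxQ := coveredWords_subset Q hx
  rw [mem_coveredWords_iff_forall_not_isolates (mem_erase.2 ⟨hxe, hxQ⟩)]
  rintro i ⟨s, hs⟩
  by_cases hes : e i = s
  · refine hpair i ⟨s, fun y hy ↦ ?_⟩
    obtain rfl | hye := eq_or_ne y e
    · simp [hes]
    · simpa [hye] using hs y (mem_erase.2 ⟨hye, hy⟩)
  · refine (mem_coveredWords_iff_forall_not_isolates hxQ).1 hx i ⟨s, fun y hy ↦ ?_⟩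
    obtain rfl | hye := eq_or_ne y e
    · simp [hes, hxe.symm]
    · exact hs y (mem_erase.2 ⟨hye, hy⟩)

/- As `x` and `v` are covered, the word to delete can be chosen different from `v`: delete `y`
unless `y = v`, and `x` otherwise. -/
lemma exists_mk_eq_of_mem_coveredWords (hv : v ∈ coveredWords Q) (hx : x ∈ coveredWords Q)
    (hy : y ∈ Q) (hxy : x ≠ y) (hpair : ∀ i, ¬ Isolates Q i s(x, y)) :
    ∃ e ∈ Q.erase v, ∃ w ∈ coveredWords (Q.erase e), s(w, e) = s(x, y) := by
  obtain rfl | hyv := eq_or_ne y v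
  · exact ⟨x, mem_erase.2 ⟨hxy, coveredWords_subset Q hx⟩, y,
      mem_coveredWords_erase hv hxy.symm (Sym2.eq_swap ▸ hpair), Sym2.eq_swap⟩
  · exact ⟨y, mem_erase.2 ⟨hyv, hy⟩, x, mem_coveredWords_erase hx hxy hpair, rfl⟩

open Classical in
lemma sym2_subset_of_mem_coveredWords (hv : v ∈ coveredWords Q) :
    Q.sym2 ⊆ {z ∈ Q.sym2 | ∃ i, Isolates Q i z} ∪ (coveredWords Q).image Sym2.diag ∪
      (Q \ coveredWords Q).offDiag.image Sym2.mk.uncurry ∪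
      (Q.erase v).biUnion fun e ↦ (coveredWords (Q.erase e)).image (s(·, e)) := by
  intro z hz
  induction z with | _ x y
  obtain ⟨hxQ, hyQ⟩ := mk_mem_sym2_iff.1 hz
  simp only [mem_union]
  by_cases hiso : ∃ i, Isolates Q i s(x, y)
  · exact .inl (.inl (.inl (mem_filter.2 ⟨hz, hiso⟩)))
  push Not at hiso
  obtain rfl | hxy := eq_or_ne x y
  · exact .inl (.inl (.inr (mem_image_of_mem Sym2.diag
      ((mem_coveredWords_iff_forall_not_isolates hxQ).2 hiso))))
  by_cases hx : x ∈ coveredWords Q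
  · obtain ⟨e, he, w, hw, hwe⟩ := exists_mk_eq_of_mem_coveredWords hv hx hyQ hxy hiso
    exact .inr (mem_biUnion.2 ⟨e, he, mem_image.2 ⟨w, hw, hwe⟩⟩)
  by_cases hy : y ∈ coveredWords Q
  · rw [Sym2.eq_swap] at hiso ⊢
    obtain ⟨e, he, w, hw, hwe⟩ := exists_mk_eq_of_mem_coveredWords hv hy hxQ hxy.symm hiso
    exact .inr (mem_biUnion.2 ⟨e, he, mem_image.2 ⟨w, hw, hwe⟩⟩)
  · exact .inl (.inr (mem_image.2 ⟨(x, y), by simp [hxQ, hyQ, hx, hy, hxy], rfl⟩))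

lemma choose_two_card_succ_le {j : ℕ} (hQ : 5 ≤ #Q) (hne : (coveredWords Q).Nonempty)
    (hj : ∀ e ∈ Q, #(coveredWords (Q.erase e)) ≤ j) :
    (#Q + 1).choose 2 ≤
      N + #(coveredWords Q) + (#Q - #(coveredWords Q)).choose 2 + (#Q - 1) * j := by
  classical
  obtain ⟨v, hv⟩ := hne
  set I := {z ∈ Q.sym2 | ∃ i, Isolates Q i z}
  set B := (Q.erase v).biUnion fun e ↦ (coveredWords (Q.erase e)).image (s(·, e))
  have hI : #I ≤ N := by
    simpa using card_le_card_of_forall_isolates (k := 2) (by omega) (filter_subset _ _)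
      (fun z _ ↦ by rw [Sym2.card_toFinset]; split_ifs <;> omega) (T := univ)
      fun z hz ↦ by simpa using (mem_filter.1 hz).2
  have hB : #B ≤ (#Q - 1) * j := by
    rw [← card_erase_of_mem (coveredWords_subset Q hv)]
    exact card_biUnion_le_card_mul _ _ _ fun e he ↦
      card_image_le.trans (hj e (mem_of_mem_erase he))
  calc (#Q + 1).choose 2 = #Q.sym2 := Q.card_sym2.symm
    _ ≤ #I + #((coveredWords Q).image Sym2.diag) +
        #((Q \ coveredWords Q).offDiag.image Sym2.mk.uncurry) + #B := by
      refine (card_le_card (sym2_subset_of_mem_coveredWords hv)).trans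
        ((card_union_le _ _).trans ?_)
      gcongr
      refine (card_union_le _ _).trans ?_
      gcongr
      exact card_union_le _ _
    _ ≤ N + #(coveredWords Q) + (#Q - #(coveredWords Q)).choose 2 + (#Q - 1) * j := by
      rw [Sym2.card_image_offDiag, card_sdiff_of_subset (coveredWords_subset Q)]
      gcongr
      exact card_image_le

lemma choose_two_card_succ_le_of_le {j m : ℕ} (hm : 0 < m) (hmQ : m + 3 ≤ #Q) (hQ : 5 ≤ #Q)
    (hmc : m ≤ #(coveredWords Q)) (hj : ∀ e ∈ Q, #(coveredWords (Q.erase e)) ≤ j) :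
    (#Q + 1).choose 2 ≤ N + m + (#Q - m).choose 2 + (#Q - 1) * j := by
  have hle := card_le_card (coveredWords_subset Q)
  have hcount := choose_two_card_succ_le hQ (card_pos.1 (hm.trans_le hmc)) hj
  have := choose_two_add_le_choose_two_add (u := #Q - #(coveredWords Q)) (v := #Q - m)
    (by omega) (by omega)
  omega

end Isolates

section TwoCoveredWords

variable {N t : ℕ} {C Q D : Finset (Fin N → Fin 2)} {c d x : Fin N → Fin 2}

lemma IsFrameproof.le_card_of_agree (hC : IsFrameproof t C) (hDC : D ⊆ C) (hc : c ∈ C)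
    (hd : d ∈ C) (hcd : c ≠ d) (hcD : c ∉ D) (hD : ∀ i, c i ≠ d i → ∃ y ∈ D, y i = c i) :
    t ≤ #D := by
  refine Nat.le_of_lt_succ ((hC.lt_card_of_mem_descSet (insert_subset hd hDC) hc
    (by simp [hcd, hcD]) fun i ↦ ?_).trans_le (card_insert_le d D))
  by_cases hi : c i = d i
  · exact ⟨d, mem_insert_self d D, hi⟩
  · obtain ⟨y, hy, hyi⟩ := hD i hi
    exact ⟨y, mem_insert_of_mem hy, hyi.symm⟩

lemma IsFrameproof.lt_card_of_agree (hC : IsFrameproof t C) (hQC : Q ⊆ C) (hDQ : D ⊆ Q)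
    (hc : c ∈ coveredWords Q) (hcD : c ∉ D) (hDcard : 2 ≤ #D)
    (hD : ∀ i, (∃ y ∈ D, y i = c i) ∨ ∃ x, Isolates Q i s(x, x)) : t < #D := by
  have hcQ := coveredWords_subset Q hc
  refine hC.lt_card_of_mem_descSet (hDQ.trans hQC) (hQC hcQ) hcD fun i ↦ ?_
  obtain ⟨y, hy, hyi⟩ | ⟨x, hx⟩ := hD i
  · exact ⟨y, hy, hyi.symm⟩
  · have hcx : c ∉ s(x, x) := notMem_of_isolates_diag hc hx
    obtain ⟨y, hy, hyx⟩ := exists_mem_ne hDcard x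
    exact ⟨y, hy, hx.apply_eq_of_notMem hcQ hcx (hDQ hy) (by simpa using hyx)⟩

lemma exists_agree_of_mem_coveredWords {i : Fin N} (hc : c ∈ coveredWords Q) (hi : c i ≠ d i) :
    ∃ y ∈ Q \ {c, d}, y i = c i := by
  obtain ⟨y, hy, hyi⟩ := (mem_coveredWords.1 hc).2 i
  refine ⟨y, ?_, hyi.symm⟩
  have hyd : y ≠ d := by
    rintro rfl
    exact hi hyi
  simp [mem_of_mem_erase hy, ne_of_mem_erase hy, hyd]

lemma exists_agree_pair_card_add_card_le {i₀ : Fin N} (hc : c ∈ coveredWords Q)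
    (hd : d ∈ coveredWords Q) (hcd : c ≠ d) (hxd : x ≠ d) (hi₀ : Isolates Q i₀ s(c, x)) :
    ∃ D ⊆ Q \ {c, d}, ∃ D' ⊆ Q \ {c, d}, (∀ i, c i ≠ d i → ∃ y ∈ D, y i = c i) ∧
      (∀ i, d i ≠ c i → ∃ y ∈ D', y i = d i) ∧
      (#D' ≤ 2 ∨ #D + #D' ≤ #{i | c i ≠ d i} + 1) := by
  have hiff {y} (hy : y ∈ Q) : y i₀ = c i₀ ↔ y = c ∨ y = x := by
    simpa using hi₀.apply_eq_iff (coveredWords_subset Q hc) (Sym2.mem_mk_left c x) hy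
  have hi₀M : c i₀ ≠ d i₀ := fun h ↦ by
    simpa [hcd.symm, hxd.symm] using (hiff (coveredWords_subset Q hd)).1 h.symm
  obtain ⟨D, hDU, D', hDU', hD, hD', hcard⟩ :=
    exists_transversal_pair_card_add_card_le (M := {i | c i ≠ d i}) (U := Q \ {c, d})
      (r := fun i y ↦ y i = c i) (i₀ := i₀) (x₀ := x)
      (fun i hi ↦ exists_agree_of_mem_coveredWords hc (mem_filter.1 hi).2)
      (fun i hi ↦ by
        have hi := (mem_filter.1 hi).2
        obtain ⟨y, hy, hyi⟩ := exists_agree_of_mem_coveredWords hd hi.symm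
        rw [pair_comm] at hy
        exact ⟨y, hy, hyi ▸ hi.symm⟩)
      (by simpa using hi₀M)
      (fun y hy hyi ↦ by
        simp only [mem_sdiff, mem_insert, mem_singleton, not_or] at hy
        exact ((hiff hy.1).1 hyi).resolve_left hy.2.1)
  refine ⟨D, hDU, D', hDU', fun i hi ↦ hD i (by simpa using hi), fun i hi ↦ ?_, hcard⟩
  obtain ⟨y, hy, hyi⟩ := hD' i (by simpa using hi.symm)
  exact ⟨y, hy, by omega⟩

lemma IsFrameproof.two_mul_add_card_le {i₀ : Fin N} (hC : IsFrameproof t C) (ht : 3 ≤ t)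
    (hQC : Q ⊆ C) (hQ : 3 ≤ #Q) (hQcd : coveredWords Q = {c, d}) (hcd : c ≠ d) (hxd : x ≠ d)
    (hi₀ : Isolates Q i₀ s(c, x)) : 2 * t + #Q ≤ N + 2 := by
  classical
  have hc : c ∈ coveredWords Q := by simp [hQcd]
  have hd : d ∈ coveredWords Q := by simp [hQcd]
  have hcQ := coveredWords_subset Q hc
  have hdQ := coveredWords_subset Q hd
  obtain ⟨D, hDU, D', hDU', hD, hD', hcard⟩ :=
    exists_agree_pair_card_add_card_le hc hd hcd hxd hi₀
  have hDQ : D ⊆ Q := hDU.trans sdiff_subset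
  have hDQ' : D' ⊆ Q := hDU'.trans sdiff_subset
  have hcD : c ∉ D := fun h ↦ by simpa using hDU h
  have hdD' : d ∉ D' := fun h ↦ by simpa using hDU' h
  have hDt := hC.le_card_of_agree (hDQ.trans hQC) (hQC hcQ) (hQC hdQ) hcd hcD hD
  have hDt' := hC.le_card_of_agree (hDQ'.trans hQC) (hQC hdQ) (hQC hcQ) hcd.symm hdD' hD'
  set T : Finset (Fin N) := {i | ∃ x, Isolates Q i s(x, x)}
  have hQT : #Q ≤ 2 + #T := by
    simpa only [hQcd, card_pair hcd] using card_le_card_coveredWords_add (Q := Q) (by omega)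
  have hagree : T ⊆ ({i | c i = d i} : Finset (Fin N)) := fun i hi ↦ by
    obtain ⟨x, hx⟩ := (mem_filter.1 hi).2
    exact mem_filter.2 ⟨mem_univ i, apply_eq_of_isolates_diag hc hd hx⟩
  have hN : #{i | c i = d i} + #{i | c i ≠ d i} = N := by
    simpa using card_filter_add_card_filter_not (s := univ) fun i : Fin N ↦ c i = d i
  obtain hTeq | hTss := hagree.eq_or_ssubset
  · have hisolates {i : Fin N} (hi : c i = d i) : ∃ x, Isolates Q i s(x, x) :=
      (mem_filter.1 (hTeq ▸ mem_filter.2 ⟨mem_univ i, hi⟩ : i ∈ T)).2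
    have hDlt := hC.lt_card_of_agree hQC hDQ hc hcD (by omega) fun i ↦
      (ne_or_eq (c i) (d i)).imp (hD i) hisolates
    have hDlt' := hC.lt_card_of_agree hQC hDQ' hd hdD' (by omega) fun i ↦
      (ne_or_eq (d i) (c i)).imp (hD' i) fun h ↦ hisolates h.symm
    have := hTeq ▸ hN
    omega
  · have := card_lt_card hTss
    omega

end TwoCoveredWords

section Bound

variable {N t : ℕ} {C Q : Finset (Fin N → Fin 2)}

lemma IsFrameproof.card_coveredWords_le_one_of_card_eq (hC : IsFrameproof t C) (ht : 3 ≤ t)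
    (hN : N ≤ 3 * t) (hQC : Q ⊆ C) (hQ : #Q = t + 2) : #(coveredWords Q) ≤ 1 := by
  by_contra! hcov
  have herase : ∀ e ∈ Q, #(coveredWords (Q.erase e)) ≤ 0 := fun e he ↦ by
    rw [hC.coveredWords_eq_empty ((erase_subset e Q).trans hQC)
      (by rw [card_erase_of_mem he]; omega), card_empty]
  have hcount := choose_two_card_succ_le_of_le two_pos (by omega) (by omega) hcov herase
  rw [hQ, show t + 2 - 2 = t by omega] at hcount
  have hchoose : (t + 2 + 1).choose 2 = t.choose 2 + 3 * t + 3 := by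
    simp only [choose_succ_two]
    omega
  omega

lemma exists_isolates_of_coveredWords_eq_pair {c d : Fin N → Fin 2} (hcd : c ≠ d)
    (hQcd : coveredWords Q = {c, d}) (hQ : 3 ≤ #Q)
    (herase : ∀ e ∈ Q, #(coveredWords (Q.erase e)) ≤ 1) :
    ∃ x, x ≠ c ∧ x ≠ d ∧ ∃ i, Isolates Q i s(c, x) ∨ Isolates Q i s(d, x) := by
  obtain ⟨x, hxQ, hx⟩ := exists_mem_notMem_of_card_lt_card (by rw [card_pair hcd]; omega :
    #({c, d} : Finset (Fin N → Fin 2)) < #Q)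
  simp only [mem_insert, mem_singleton, not_or] at hx
  refine ⟨x, hx.1, hx.2, ?_⟩
  by_contra! hpair
  exact hcd (card_le_one.1 (herase x hxQ)
    c (mem_coveredWords_erase (by simp [hQcd]) (Ne.symm hx.1) fun i ↦ (hpair i).1)
    d (mem_coveredWords_erase (by simp [hQcd]) (Ne.symm hx.2) fun i ↦ (hpair i).2))

lemma IsFrameproof.card_coveredWords_le_one_of_erase (hC : IsFrameproof t C) (ht : 3 ≤ t)
    (hN : N ≤ 3 * t) (hQC : Q ⊆ C) (hQ : t + 3 ≤ #Q)
    (herase : ∀ e ∈ Q, #(coveredWords (Q.erase e)) ≤ 1) : #(coveredWords Q) ≤ 1 := by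
  by_contra! hcov
  obtain htwo | hthree := (Nat.succ_le_of_lt hcov).eq_or_lt
  · obtain ⟨c, d, hcd, hQcd⟩ := card_eq_two.1 htwo.symm
    obtain ⟨x, hxc, hxd, i, hi | hi⟩ :=
      exists_isolates_of_coveredWords_eq_pair hcd hQcd (by omega) herase
    · have := hC.two_mul_add_card_le ht hQC (by omega) hQcd hcd hxd hi
      omega
    · have := hC.two_mul_add_card_le ht hQC (by omega) (hQcd.trans (pair_comm c d)) hcd.symm hxc hi
      omega
  · have hcount := choose_two_card_succ_le_of_le three_pos (by omega) (by omega) hthree herase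
    obtain ⟨m, hm⟩ := Nat.exists_eq_add_of_le' (by omega : 3 ≤ #Q)
    rw [hm, Nat.add_sub_cancel] at hcount
    have hchoose : (m + 3 + 1).choose 2 = m.choose 2 + 4 * m + 6 := by
      simp only [choose_succ_two]
      omega
    omega

lemma IsFrameproof.card_coveredWords_le_one (hC : IsFrameproof t C) (ht : 3 ≤ t)
    (hN : N ≤ 3 * t) (hQC : Q ⊆ C) : #(coveredWords Q) ≤ 1 := by
  induction Q using Finset.strongInduction with
  | H Q ih =>
    obtain hle | heq | hge : #Q ≤ t + 1 ∨ #Q = t + 2 ∨ t + 3 ≤ #Q := by omega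
    · simp [hC.coveredWords_eq_empty hQC hle]
    · exact hC.card_coveredWords_le_one_of_card_eq ht hN hQC heq
    · exact hC.card_coveredWords_le_one_of_erase ht hN hQC hge fun e he ↦
        ih _ (erase_ssubset he) ((erase_subset e Q).trans hQC)

lemma IsFrameproof.card_le_of_card_coveredWords_le_one (hC : IsFrameproof t C) (ht : 2 ≤ t)
    (hcard : 3 ≤ #C) (hcov : #(coveredWords C) ≤ 1) : #C ≤ N := by
  classical
  by_contra! hNC
  set T : Finset (Fin N) := {i | ∃ x, Isolates C i s(x, x)}
  have hCT : #C ≤ #(coveredWords C) + #T := card_le_card_coveredWords_add hcard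
  have hTN : #T ≤ N := T.card_le_univ.trans_eq (Fintype.card_fin N)
  have hTuniv : T = univ := eq_univ_of_card T (by rw [Fintype.card_fin]; omega)
  obtain ⟨c, hc⟩ : (coveredWords C).Nonempty := card_pos.1 (by omega)
  have hcC := coveredWords_subset C hc
  obtain ⟨D, hDC, hD⟩ := exists_subset_card_eq (s := C.erase c) (n := 2)
    (by rw [card_erase_of_mem hcC]; omega)
  have := hC.lt_card_of_agree Subset.rfl (hDC.trans (erase_subset c C)) hc
    (fun h ↦ notMem_erase c C (hDC h)) hD.ge
    fun i ↦ .inr (mem_filter.1 (hTuniv ▸ mem_univ i : i ∈ T)).2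
  omega

end Bound

end Frameproof

theorem stmt_14_general (t N : ℕ) (ht : 3 ≤ t) (hN : 2 ≤ N) (hN' : N ≤ 3 * t)
    (C : Finset (Fin N → Fin 2)) (hC : IsFrameproof t C) :
    C.card ≤ N := by
  by_contra! hNC
  have hcov := hC.card_coveredWords_le_one ht hN' Finset.Subset.rfl
  exact hNC.not_ge (hC.card_le_of_card_coveredWords_le_one (by omega) (by omega) hcov)

/-- For all `t ≥ 3` and all `t+1 ≤ N ≤ 3t`, every binary `t`-frameproof code of
length `N` has at most `N` codewords. -/
theorem stmt_14 (t N : ℕ) (ht : 3 ≤ t) (h1 : t + 1 ≤ N) (h2 : N ≤ 3 * t)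
    (C : Finset (Fin N → Fin 2)) (hC : IsFrameproof t C) :
    C.card ≤ N :=
  stmt_14_general t N ht (by omega) h2 C hC
end

section
/- For every positive integer t, every t-cover-free family F of subsets of an N-element set with |F| > N satisfies N ≥ ((15+√33)/24)·t². Equivalently, if N*(t) denotes the minimal N such that there exists a t-cover-free family of more than N subsets of an N-element set, then N*(t) ≥ ((15+√33)/24)·t². -/
/-!
A minimal subfamily among those with more members than points has no private points: every point
of a member lies in another member. Let `κ = (15 + √33) / 24`. If some member has more than
`κ * (2 * t - 1)` points, remove it together with its points; what remains is `(t - 1)`-cover-free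
and `κ * (t - 1) ^ 2 + κ * (2 * t - 1) = κ * t ^ 2`, so induction on `t` applies.

Otherwise consider a member `A` of size `t + s`. If `s` disjoint pairs of points of `A` were each
contained in some other member, these `s` members and one member for each of the remaining `t - s`
points would cover `A`. By the Erdős–Gallai theorem on graphs without `s` disjoint edges, at least
`(κ * t ^ 2 - 1) / 2` pairs are therefore contained in `A` alone. Such pairs are distinct for
distinct members, and there are at most `N.choose 2` of them.

For the Erdős–Gallai theorem, add edges for as long as no `s` of them are disjoint. Adding any
further edge `uv` then completes a matching, so augmenting paths show that the degrees of `u` and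
`v` sum to at most `2 * s - 2`; taking this sum maximal bounds the degrees of all non-neighbours
of `v`.
-/

open Finset

variable {α : Type*}

section Matching

/-- `M` is a matching in the set family `G`: a subfamily of pairwise disjoint members. A graph on
`X` is encoded below as a family `G ⊆ X.powersetCard 2`, its members being the edges. -/
def IsMatchingIn (G M : Finset (Finset α)) : Prop :=
  M ⊆ G ∧ (M : Set (Finset α)).PairwiseDisjoint id

/-- The family `G` contains a matching with exactly `s` members. -/
def HasMatching (G : Finset (Finset α)) (s : ℕ) : Prop :=
  ∃ M, IsMatchingIn G M ∧ #M = s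

variable {G H M : Finset (Finset α)} {e : Finset α} {s : ℕ}

theorem HasMatching.mono (hGH : G ⊆ H) (hG : HasMatching G s) : HasMatching H s := by
  obtain ⟨M, hM, hMs⟩ := hG
  exact ⟨M, ⟨hM.1.trans hGH, hM.2⟩, hMs⟩

variable [DecidableEq α]

theorem IsMatchingIn.erase (hM : IsMatchingIn G M) (e : Finset α) :
    IsMatchingIn G (M.erase e) :=
  ⟨(erase_subset _ _).trans hM.1, hM.2.subset (coe_subset.2 (erase_subset _ _))⟩

theorem IsMatchingIn.insert (hM : IsMatchingIn G M) (heG : e ∈ G) (he : e.Nonempty)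
    (hd : Disjoint e (M.sup id)) :
    IsMatchingIn G (insert e M) ∧ #(insert e M) = #M + 1 := by
  rw [Finset.disjoint_sup_right] at hd
  refine ⟨⟨insert_subset heG hM.1, ?_⟩, card_insert_of_notMem fun heM => ?_⟩
  · rw [coe_insert]
    exact hM.2.insert fun f hf _ => hd hf
  · exact he.ne_empty (disjoint_self_iff_empty e |>.1 (hd heM))

theorem IsMatchingIn.disjoint_sup_erase (hM : IsMatchingIn G M) (he : e ∈ M) :
    Disjoint e ((M.erase e).sup id) :=
  Finset.disjoint_sup_right.2 fun _ hf =>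
    hM.2 he (mem_of_mem_erase hf) (ne_of_mem_erase hf).symm

end Matching

theorem hasMatching_powersetCard_two {X : Finset α} {s : ℕ} (hs : 2 * s ≤ #X) :
    HasMatching (X.powersetCard 2) s := by
  classical
  induction s generalizing X with
  | zero => exact ⟨∅, ⟨empty_subset _, by simp⟩, card_empty⟩
  | succ s ih =>
    obtain ⟨e, heX, he⟩ := exists_subset_card_eq (show 2 ≤ #X by omega)
    have hXe : 2 * s ≤ #(X \ e) := by rw [card_sdiff_of_subset heX]; omega
    obtain ⟨M, hM, rfl⟩ := ih hXe
    have hM' : IsMatchingIn (X.powersetCard 2) M :=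
      ⟨hM.1.trans (powersetCard_mono sdiff_subset), hM.2⟩
    have hd : Disjoint e (M.sup id) := Finset.disjoint_sup_right.2 fun f hf =>
      disjoint_sdiff.mono_right (mem_powersetCard.1 (hM.1 hf)).1
    exact ⟨_, hM'.insert (mem_powersetCard.2 ⟨heX, he⟩) (card_pos.1 (by omega)) hd⟩


section ErdosGallai

variable [DecidableEq α] {X L e : Finset α} {G M : Finset (Finset α)} {k s : ℕ} {u v x y : α}

/-- The neighbourhood of `v` in the graph on `X` with edge family `G`. -/
def neighborsIn (X : Finset α) (G : Finset (Finset α)) (v : α) : Finset α :=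
  {w ∈ X | {v, w} ∈ G}

theorem neighborsIn_subset_sup (hM : IsMatchingIn G M) (hmax : ¬ HasMatching G (#M + 1))
    (hu : u ∉ M.sup id) : neighborsIn X G u ⊆ M.sup id := by
  intro w hw
  by_contra hwM
  refine hmax ⟨_, hM.insert (mem_filter.1 hw).2 (insert_nonempty _ _) ?_⟩
  simp only [disjoint_insert_left, disjoint_singleton_left]
  exact ⟨hu, hwM⟩

/-- Otherwise `u - x - y - v` would be an augmenting path. -/
theorem IsMatchingIn.not_exchange (hM : IsMatchingIn G M) (hmax : ¬ HasMatching G (#M + 1))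
    (huv : u ≠ v) (hu : u ∉ M.sup id) (hv : v ∉ M.sup id) (hxy : x ≠ y) (he : {x, y} ∈ M)
    (hux : {u, x} ∈ G) : {v, y} ∉ G := by
  intro hvy
  have hxyM : {x, y} ⊆ M.sup id := le_sup (f := id) he
  have hxM : x ∈ M.sup id := hxyM (by simp)
  have hyM : y ∈ M.sup id := hxyM (by simp)
  have hsub : (M.erase {x, y}).sup id ⊆ M.sup id := sup_mono (erase_subset _ _)
  have hd := hM.disjoint_sup_erase he
  simp only [disjoint_insert_left, disjoint_singleton_left] at hd
  obtain ⟨hM₁, hcard₁⟩ := (hM.erase {x, y}).insert hux (insert_nonempty _ _) (by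
    simp only [disjoint_insert_left, disjoint_singleton_left]
    exact ⟨fun h => hu (hsub h), hd.1⟩)
  obtain ⟨hM₂, hcard₂⟩ := hM₁.insert hvy (insert_nonempty _ _) (by
    rw [sup_insert, id, sup_eq_union, disjoint_union_right]
    simp only [disjoint_insert_left, disjoint_singleton_left, mem_insert, mem_singleton, not_or]
    exact ⟨⟨⟨huv.symm, fun h => hv (h ▸ hxM)⟩, fun h => hu (h ▸ hyM), hxy.symm⟩,
      fun h => hv (hsub h), hd.2⟩)
  refine hmax ⟨_, hM₂, ?_⟩
  rw [hcard₂, hcard₁, card_erase_add_one he]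

theorem IsMatchingIn.card_neighborsIn_inter_add_le (hM : IsMatchingIn G M)
    (hmax : ¬ HasMatching G (#M + 1)) (huv : u ≠ v) (hu : u ∉ M.sup id) (hv : v ∉ M.sup id)
    (he : e ∈ M) (he2 : #e = 2) :
    #(neighborsIn X G u ∩ e) + #(neighborsIn X G v ∩ e) ≤ 2 := by
  obtain ⟨x, y, hxy, rfl⟩ := card_eq_two.1 he2
  have hux : x ∈ neighborsIn X G u → y ∉ neighborsIn X G v := fun hx hy =>
    hM.not_exchange hmax huv hu hv hxy he (mem_filter.1 hx).2 (mem_filter.1 hy).2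
  have huy : y ∈ neighborsIn X G u → x ∉ neighborsIn X G v := fun hy hx =>
    hM.not_exchange hmax huv hu hv hxy.symm (pair_comm x y ▸ he) (mem_filter.1 hy).2
      (mem_filter.1 hx).2
  by_cases hxu : x ∈ neighborsIn X G u <;> by_cases hyu : y ∈ neighborsIn X G u <;>
    by_cases hxv : x ∈ neighborsIn X G v <;> by_cases hyv : y ∈ neighborsIn X G v <;>
    simp_all

theorem card_neighborsIn_eq_sum (hM : IsMatchingIn G M) (hmax : ¬ HasMatching G (#M + 1))
    (hu : u ∉ M.sup id) :
    #(neighborsIn X G u) = ∑ e ∈ M, #(neighborsIn X G u ∩ e) := by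
  have hd : ∀ e ∈ M, ∀ f ∈ M, e ≠ f →
      Disjoint (neighborsIn X G u ∩ e) (neighborsIn X G u ∩ f) := fun e he f hf hef =>
    (hM.2 he hf hef).mono inter_subset_right inter_subset_right
  have hsub := neighborsIn_subset_sup (X := X) hM hmax hu
  rw [sup_eq_biUnion] at hsub
  rw [← card_biUnion hd, ← inter_biUnion]
  exact congrArg card (inter_eq_left.2 hsub).symm

theorem card_neighborsIn_add_le (hG : ∀ e ∈ G, #e = 2) (huv : u ≠ v)
    (hmatch : ¬ HasMatching G s) (hadd : HasMatching (insert {u, v} G) s) :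
    #(neighborsIn X G u) + #(neighborsIn X G v) + 2 ≤ 2 * s := by
  obtain ⟨M, hM, hMs⟩ := hadd
  have huvM : {u, v} ∈ M := by
    by_contra h
    exact hmatch ⟨M, ⟨(subset_insert_iff_of_notMem h).1 hM.1, hM.2⟩, hMs⟩
  have hM₀ : IsMatchingIn G (M.erase {u, v}) := ⟨subset_insert_iff.1 hM.1, (hM.erase _).2⟩
  have hcard : #(M.erase {u, v}) + 1 = s := by rw [card_erase_add_one huvM, hMs]
  have hd := hM.disjoint_sup_erase huvM
  simp only [disjoint_insert_left, disjoint_singleton_left] at hd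
  rw [← hcard] at hmatch ⊢
  rw [card_neighborsIn_eq_sum hM₀ hmatch hd.1, card_neighborsIn_eq_sum hM₀ hmatch hd.2,
    ← sum_add_distrib]
  have := sum_le_card_nsmul (M.erase {u, v}) _ 2 fun e he =>
    hM₀.card_neighborsIn_inter_add_le (X := X) hmatch huv hd.1 hd.2 he (hG e (hM₀.1 he))
  rw [smul_eq_mul] at this
  omega

theorem card_filter_mem_le_card_neighborsIn (hG : G ⊆ X.powersetCard 2) (v : α) :
    #{e ∈ G | v ∈ e} ≤ #(neighborsIn X G v) := by
  refine card_le_card_of_surjOn (fun w => {v, w}) fun e he => ?_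
  obtain ⟨heG, hve⟩ := mem_filter.1 he
  obtain ⟨heX, he2⟩ := mem_powersetCard.1 (hG heG)
  obtain ⟨w, hw⟩ := card_eq_one.1 ((card_erase_of_mem hve).trans (by rw [he2]))
  obtain rfl : e = {v, w} := by rw [← hw, insert_erase hve]
  exact ⟨w, mem_filter.2 ⟨heX (mem_insert_of_mem (mem_singleton_self w)), heG⟩, rfl⟩

theorem card_le_of_card_neighborsIn_le (hG : G ⊆ X.powersetCard 2) (hLX : L ⊆ X)
    (hL : ∀ w ∈ L, #(neighborsIn X G w) ≤ k) : #G ≤ k * #L + (#X - #L).choose 2 := by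
  have hsub : G ⊆ L.biUnion (fun w => {e ∈ G | w ∈ e}) ∪ (X \ L).powersetCard 2 := by
    intro e he
    obtain ⟨heX, he2⟩ := mem_powersetCard.1 (hG he)
    by_cases hd : Disjoint e L
    · exact mem_union_right _ (mem_powersetCard.2 ⟨subset_sdiff.2 ⟨heX, hd⟩, he2⟩)
    · obtain ⟨w, hwe, hwL⟩ := not_disjoint_iff.1 hd
      exact mem_union_left _ (mem_biUnion.2 ⟨w, hwL, mem_filter.2 ⟨he, hwe⟩⟩)
  have hinc : #(L.biUnion fun w => {e ∈ G | w ∈ e}) ≤ #L * k :=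
    card_biUnion_le_card_mul _ _ _ fun w hw =>
      (card_filter_mem_le_card_neighborsIn hG w).trans (hL w hw)
  calc #G ≤ #(L.biUnion fun w => {e ∈ G | w ∈ e}) + #((X \ L).powersetCard 2) :=
        (card_le_card hsub).trans (card_union_le _ _)
    _ ≤ k * #L + (#X - #L).choose 2 := by
      rw [card_powersetCard, card_sdiff_of_subset hLX, mul_comm k]
      exact Nat.add_le_add_right hinc _

theorem exists_nonadjacent_max_card_neighborsIn (hs : 2 * s ≤ #X) (hmatch : ¬ HasMatching G s) :
    ∃ u ∈ X, ∃ v ∈ X, u ≠ v ∧ {u, v} ∉ G ∧ #(neighborsIn X G u) ≤ #(neighborsIn X G v) ∧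
      ∀ w ∈ X, w ≠ v → {v, w} ∉ G → #(neighborsIn X G w) ≤ #(neighborsIn X G u) := by
  let N := X.offDiag.filter fun p => {p.1, p.2} ∉ G
  have hN : N.Nonempty := by
    by_contra h
    refine hmatch ((hasMatching_powersetCard_two hs).mono fun e he => ?_)
    obtain ⟨heX, he2⟩ := mem_powersetCard.1 he
    obtain ⟨x, y, hxy, rfl⟩ := card_eq_two.1 he2
    by_contra hxyG
    exact h ⟨(x, y), mem_filter.2 ⟨mem_offDiag.2 ⟨heX (by simp), heX (by simp), hxy⟩, hxyG⟩⟩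
  obtain ⟨⟨u, v⟩, huv, hmax⟩ :=
    exists_max_image N (fun p => #(neighborsIn X G p.1) + #(neighborsIn X G p.2)) hN
  simp only [N, mem_filter, mem_offDiag, Prod.forall, and_imp] at huv hmax
  obtain ⟨⟨hu, hv, hne⟩, huvG⟩ := huv
  rcases le_total #(neighborsIn X G u) #(neighborsIn X G v) with hle | hle
  · refine ⟨u, hu, v, hv, hne, huvG, hle, fun w hw hwv hvw => ?_⟩
    have := hmax v w hv hw hwv.symm hvw
    omega
  · refine ⟨v, hv, u, hu, hne.symm, pair_comm u v ▸ huvG, hle, fun w hw hwu huw => ?_⟩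
    have := hmax u w hu hw hwu.symm huw
    omega

theorem exists_card_le_of_saturated (hs : 2 * s ≤ #X) (hG : G ⊆ X.powersetCard 2)
    (hmatch : ¬ HasMatching G s)
    (hsat : ∀ e ∈ X.powersetCard 2, e ∉ G → HasMatching (insert e G) s) :
    ∃ k l, k < l ∧ k + l + 1 = 2 * s ∧ #G ≤ k * (#X - l) + l.choose 2 := by
  have hG2 : ∀ e ∈ G, #e = 2 := fun e he => (mem_powersetCard.1 (hG he)).2
  obtain ⟨u, hu, v, hv, huv, huvG, hle, hmax⟩ := exists_nonadjacent_max_card_neighborsIn hs hmatch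
  have hdeg := card_neighborsIn_add_le (X := X) hG2 huv hmatch
    (hsat _ (mem_powersetCard.2 ⟨by simp [insert_subset_iff, hu, hv], card_pair huv⟩) huvG)
  set k := #(neighborsIn X G u)
  obtain ⟨l, hl⟩ : ∃ l, k + l + 1 = 2 * s := ⟨2 * s - 1 - k, by omega⟩
  have hcard : #X - l ≤ #(X.erase v \ neighborsIn X G v) := by
    have := le_card_sdiff (neighborsIn X G v) (X.erase v)
    rw [card_erase_of_mem hv] at this
    omega
  obtain ⟨L, hL, hLcard⟩ := exists_subset_card_eq hcard
  have hLk : ∀ w ∈ L, #(neighborsIn X G w) ≤ k := by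
    intro w hw
    obtain ⟨hwX, hwv⟩ := mem_sdiff.1 (hL hw)
    obtain ⟨hne, hwX⟩ := mem_erase.1 hwX
    exact hmax w hwX hne fun h => hwv (mem_filter.2 ⟨hwX, h⟩)
  have hLX : L ⊆ X := hL.trans (sdiff_subset.trans (erase_subset _ _))
  have hbound := card_le_of_card_neighborsIn_le hG hLX hLk
  rw [hLcard, Nat.sub_sub_self (by omega)] at hbound
  exact ⟨k, l, by omega, hl, hbound⟩

theorem exists_le_saturated (hG : G ⊆ X.powersetCard 2) (hmatch : ¬ HasMatching G s) :
    ∃ H, G ⊆ H ∧ H ⊆ X.powersetCard 2 ∧ ¬ HasMatching H s ∧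
      ∀ e ∈ X.powersetCard 2, e ∉ H → HasMatching (insert e H) s := by
  classical
  obtain ⟨H, hGH, hH⟩ := exists_le_maximal {H ∈ (X.powersetCard 2).powerset | ¬ HasMatching H s}
    (mem_filter.2 ⟨mem_powerset.2 hG, hmatch⟩)
  obtain ⟨hHX, hHs⟩ := mem_filter.1 hH.prop
  rw [mem_powerset] at hHX
  refine ⟨H, hGH, hHX, hHs, fun e he heH => by_contra fun hns => heH ?_⟩
  have hmem : insert e H ∈ {H ∈ (X.powersetCard 2).powerset | ¬ HasMatching H s} :=
    mem_filter.2 ⟨mem_powerset.2 (insert_subset he hHX), hns⟩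
  exact hH.le_of_ge hmem (subset_insert e H) (mem_insert_self e H)

end ErdosGallai

/-- The bound is attained by the graph in which `l` vertices span a clique and each of the others
is joined to the same `k` vertices of that clique. -/
theorem exists_card_le_of_not_hasMatching {X : Finset α} {G : Finset (Finset α)} {s : ℕ}
    (hs : 2 * s ≤ #X) (hG : G ⊆ X.powersetCard 2) (hmatch : ¬ HasMatching G s) :
    ∃ k l, k < l ∧ k + l + 1 = 2 * s ∧ #G ≤ k * (#X - l) + l.choose 2 := by
  classical
  obtain ⟨H, hGH, hHX, hHs, hsat⟩ := exists_le_saturated hG hmatch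
  obtain ⟨k, l, hkl, hs', hle⟩ := exists_card_le_of_saturated hs hHX hHs hsat
  exact ⟨k, l, hkl, hs', (card_le_card hGH).trans hle⟩

section CoverFree

variable [DecidableEq α] {F F' P : Finset (Finset α)} {A : Finset α} {t : ℕ}

theorem IsCoverFree.mono (hF : IsCoverFree t F) (h : F' ⊆ F) : IsCoverFree t F' :=
  fun A hA T hT => hF A (h hA) T (hT.trans (erase_subset_erase A h))

theorem IsCoverFree.not_subset_sup (hF : IsCoverFree t F) (hA : A ∈ F)
    (hP : ∀ p ∈ P, ∃ B ∈ F.erase A, p ⊆ B) (hPt : #P ≤ t) : ¬ A ⊆ P.sup id := by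
  choose! B hB hpB using hP
  refine fun hAP => hF A hA (P.image B) (image_subset_iff.2 hB) (card_image_le.trans hPt) ?_
  refine hAP.trans ?_
  rw [sup_image]
  exact sup_mono_fun hpB

theorem IsCoverFree.nonempty (hF : IsCoverFree t F) (hA : A ∈ F) : A.Nonempty := by
  rw [nonempty_iff_ne_empty]
  rintro rfl
  exact hF ∅ hA ∅ (empty_subset _) (Nat.zero_le _) (empty_subset _)

theorem IsCoverFree.image_sdiff (hF : IsCoverFree (t + 1) F) (hA : A ∈ F) :
    IsCoverFree t ((F.erase A).image (· \ A)) := by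
  intro _ hBA T hT hTt hsub
  obtain ⟨B, hB, rfl⟩ := mem_image.1 hBA
  obtain ⟨hBA, hBF⟩ := mem_erase.1 hB
  refine hF.not_subset_sup hBF (P := insert A T) ?_ ((card_insert_le _ _).trans (by omega)) ?_
  · intro p hp
    rcases mem_insert.1 hp with rfl | hp
    · exact ⟨p, mem_erase.2 ⟨hBA.symm, hA⟩, Subset.rfl⟩
    · obtain ⟨hne, hp⟩ := mem_erase.1 (hT hp)
      obtain ⟨C, hC, rfl⟩ := mem_image.1 hp
      refine ⟨C, mem_erase.2 ⟨?_, mem_of_mem_erase hC⟩, sdiff_subset⟩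
      rintro rfl
      exact hne rfl
  · rw [sup_insert, id, sup_eq_union]
    exact sdiff_le_iff.1 hsub

theorem IsCoverFree.injOn_sdiff (hF : IsCoverFree t F) (ht : 2 ≤ t) (hA : A ∈ F) :
    Set.InjOn (· \ A) (F.erase A : Set (Finset α)) := by
  intro B hB C hC (hBC : B \ A = C \ A)
  obtain ⟨hBA, hBF⟩ := mem_erase.1 (mem_coe.1 hB)
  obtain ⟨_, hCF⟩ := mem_erase.1 (mem_coe.1 hC)
  by_contra hne
  refine hF B hBF {A, C} ?_ (card_le_two.trans ht) ?_
  · exact insert_subset (mem_erase.2 ⟨hBA.symm, hA⟩)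
      (singleton_subset_iff.2 (mem_erase.2 ⟨Ne.symm hne, hCF⟩))
  · rw [sup_insert, sup_singleton, id, id, sup_eq_union]
    exact sdiff_le_iff.1 (hBC.subset.trans sdiff_subset)

theorem IsCoverFree.card_sup_pos (hF : IsCoverFree t F) (hne : F.Nonempty) :
    0 < #(F.sup id) := by
  obtain ⟨A, hA⟩ := hne
  exact card_pos.2 ((hF.nonempty hA).mono (le_sup (f := id) hA))

theorem card_sup_image_sdiff_add_card_le (hA : A ∈ F) :
    #(((F.erase A).image (· \ A)).sup id) + #A ≤ #(F.sup id) := by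
  have hAF : A ⊆ F.sup id := le_sup (f := id) hA
  have hsub : ((F.erase A).image (· \ A)).sup id ⊆ F.sup id \ A := by
    rw [sup_image]
    exact Finset.sup_le fun B hB =>
      sdiff_subset_sdiff (le_sup (f := id) (mem_of_mem_erase hB)) Subset.rfl
  rw [← card_sdiff_add_card_eq_card hAF]
  exact Nat.add_le_add_right (card_le_card hsub) _

theorem exists_subset_without_private_points (hF : #(F.sup id) < #F) :
    ∃ F' ⊆ F, #(F'.sup id) < #F' ∧ ∀ A ∈ F', A ⊆ (F'.erase A).sup id := by
  obtain ⟨F', hF'F, hF'⟩ := exists_minimal_le_of_wellFoundedLT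
    (fun H : Finset (Finset α) => #(H.sup id) < #H) F hF
  refine ⟨F', hF'F, hF'.prop, fun A hA x hx => by_contra fun hxF => ?_⟩
  have hlt : #((F'.erase A).sup id) < #(F'.sup id) :=
    card_lt_card (ssubset_iff_of_subset (sup_mono (erase_subset A F')) |>.2
      ⟨x, le_sup (f := id) hA hx, hxF⟩)
  have hcard := card_erase_add_one hA
  have hdef := hF'.prop
  exact hF'.not_prop_of_lt (erase_ssubset hA) (by omega)

end CoverFree

section PairCounting

variable [DecidableEq α] {F : Finset (Finset α)} {A : Finset α} {s t : ℕ}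

/-- The pairs of elements of `A` contained in some other member of the family `F`. -/
def sharedPairs (F : Finset (Finset α)) (A : Finset α) : Finset (Finset α) :=
  {p ∈ A.powersetCard 2 | ∃ B ∈ F.erase A, p ⊆ B}

/-- The own pairs of `A`: those contained in no other member of the family `F`. -/
def ownPairs (F : Finset (Finset α)) (A : Finset α) : Finset (Finset α) :=
  {p ∈ A.powersetCard 2 | ¬ ∃ B ∈ F.erase A, p ⊆ B}

theorem card_sharedPairs_add_card_ownPairs (F : Finset (Finset α)) (A : Finset α) :
    #(sharedPairs F A) + #(ownPairs F A) = (#A).choose 2 := by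
  rw [sharedPairs, ownPairs, card_filter_add_card_filter_not, card_powersetCard]

theorem sum_card_ownPairs_le (F : Finset (Finset α)) :
    ∑ A ∈ F, #(ownPairs F A) ≤ (#(F.sup id)).choose 2 := by
  rw [← card_powersetCard, ← card_biUnion]
  · refine card_le_card (biUnion_subset.2 fun A hA => ?_)
    exact (filter_subset _ _).trans (powersetCard_mono (le_sup (f := id) hA))
  · refine fun A hA B _ hAB => disjoint_left.2 fun p hpA hpB => ?_
    exact (mem_filter.1 hpB).2 ⟨A, mem_erase.2 ⟨hAB, hA⟩,
      (mem_powersetCard.1 (mem_filter.1 hpA).1).1⟩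

theorem exists_mem_erase_singleton_subset (hA : A ⊆ (F.erase A).sup id) {x : α} (hx : x ∈ A) :
    ∃ B ∈ F.erase A, {x} ⊆ B := by
  simpa only [mem_sup, id, singleton_subset_iff] using hA hx

/-- The edges of a matching together with singletons for the unmatched points would cover `A`. -/
theorem IsCoverFree.not_hasMatching_sharedPairs (hF : IsCoverFree t F) (hAF : A ∈ F)
    (hA : A ⊆ (F.erase A).sup id) (hs : #A ≤ t + s) : ¬ HasMatching (sharedPairs F A) s := by
  rintro ⟨M, hM, rfl⟩
  have hMA : M.sup id ⊆ A := Finset.sup_le fun e he =>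
    (mem_powersetCard.1 (mem_filter.1 (hM.1 he)).1).1
  have hMcard : #(M.sup id) = #M * 2 := by
    rw [sup_eq_biUnion, card_biUnion hM.2]
    exact sum_const_nat fun e he => (mem_powersetCard.1 (mem_filter.1 (hM.1 he)).1).2
  let R := A \ M.sup id
  have hR : #R + #(M.sup id) = #A := card_sdiff_add_card_eq_card hMA
  refine hF.not_subset_sup hAF (P := M ∪ R.image singleton) ?_ ?_ ?_
  · intro p hp
    rcases mem_union.1 hp with hp | hp
    · exact (mem_filter.1 (hM.1 hp)).2
    · obtain ⟨x, hx, rfl⟩ := mem_image.1 hp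
      exact exists_mem_erase_singleton_subset hA (mem_sdiff.1 hx).1
  · have := card_union_le M (R.image singleton)
    have := card_image_le (s := R) (f := (singleton : α → Finset α))
    omega
  · rw [sup_union, sup_image, Function.id_comp, sup_singleton_eq_self]
    exact (union_sdiff_of_subset hMA).superset

theorem IsCoverFree.lt_card (hF : IsCoverFree t F) (hAF : A ∈ F)
    (hA : A ⊆ (F.erase A).sup id) : t < #A := by
  by_contra! h
  exact hF.not_hasMatching_sharedPairs hAF hA (s := 0) h ⟨∅, ⟨empty_subset _, by simp⟩, rfl⟩

theorem IsCoverFree.exists_le_two_mul_card_ownPairs (hF : IsCoverFree t F) (hAF : A ∈ F)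
    (hA : A ⊆ (F.erase A).sup id) (hcard : #A ≤ 2 * t) :
    ∃ j : ℕ, 1 ≤ j ∧ t + j ≤ #A ∧
      ((t : ℝ) - j + 1) * (t + 3 * j - 2) ≤ 2 * #(ownPairs F A) := by
  have htA := hF.lt_card hAF hA
  obtain ⟨s, hs⟩ : ∃ s, #A = t + s := ⟨#A - t, by omega⟩
  obtain ⟨k, l, hkl, hs', hshared⟩ := exists_card_le_of_not_hasMatching (by omega)
    (filter_subset _ _) (hF.not_hasMatching_sharedPairs hAF hA hs.le)
  obtain ⟨j, rfl⟩ : ∃ j, s = k + j := ⟨s - k, by omega⟩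
  have hpairs := card_sharedPairs_add_card_ownPairs F A
  have hown : (#A).choose 2 ≤ k * (#A - l) + l.choose 2 + #(ownPairs F A) := by
    rw [← hpairs]
    exact Nat.add_le_add_right hshared _
  refine ⟨j, by omega, by omega, ?_⟩
  have hownR : ((#A).choose 2 : ℝ) ≤ k * (#A - l : ℕ) + l.choose 2 + #(ownPairs F A) := by
    exact_mod_cast hown
  rw [Nat.cast_sub (by omega), Nat.cast_choose_two, Nat.cast_choose_two, hs] at hownR
  have hl : (l : ℝ) = k + 2 * j - 1 := by
    rw [eq_sub_iff_add_eq]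
    exact_mod_cast (by omega : l + 1 = k + 2 * j)
  rw [hl] at hownR
  push_cast at hownR
  linarith

end PairCounting

section Bound

/-- The rate `κ` in the bound `κ * t ^ 2`. It is the largest root of
`(2 - 2 * κ) * (6 * κ - 2) = κ`: a member with `κ * (2 * t - 1)` points, few enough not to be
removed in the induction on `t`, then has at least about `κ * t ^ 2 / 2` own pairs. -/
noncomputable def coverFreeRate : ℝ := (15 + √33) / 24

local notation "κ" => coverFreeRate

theorem coverFreeRate_mem_Ioo : κ ∈ Set.Ioo 0.86 0.87 := by
  have h₁ : (5.7 : ℝ) < √33 := Real.lt_sqrt_of_sq_lt (by norm_num)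
  have h₂ : √33 < 5.8 := (Real.sqrt_lt' (by norm_num)).2 (by norm_num)
  constructor <;> rw [coverFreeRate] <;> linarith

theorem coverFreeRate_quadratic : (2 - 2 * κ) * (6 * κ - 2) = κ := by
  have := Real.sq_sqrt (show (0 : ℝ) ≤ 33 by norm_num)
  rw [coverFreeRate]
  linarith

/-- The right-hand side is concave in `j` and equals `t * (t + 1)` at `j = 1`. -/
theorem le_mul_of_le_endpoints {t j m b : ℝ} (hj : 1 ≤ j) (hjm : j ≤ m)
    (h₁ : b ≤ t * (t + 1)) (hm : b ≤ (t - m + 1) * (t + 3 * m - 2)) :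
    b ≤ (t - j + 1) * (t + 3 * j - 2) := by
  rcases le_total (3 * j) (2 * t + 2) with h | h
  · have : 0 ≤ (j - 1) * (2 * t + 2 - 3 * j) := mul_nonneg (by linarith) (by linarith)
    linarith
  · have : 0 ≤ (m - j) * (3 * (m + j) - 2 * t - 5) := mul_nonneg (by linarith) (by linarith)
    linarith

theorem coverFreeRate_mul_sq_sub_one_le {t j : ℝ} (ht : 2 ≤ t) (hj : 1 ≤ j)
    (hjt : t + j ≤ κ * (2 * t - 1)) :
    κ * t ^ 2 - 1 ≤ (t - j + 1) * (t + 3 * j - 2) := by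
  obtain ⟨hlb, hub⟩ := coverFreeRate_mem_Ioo
  have hq := coverFreeRate_quadratic
  refine le_mul_of_le_endpoints hj (le_sub_iff_add_le'.2 hjt) ?_ ?_
  · nlinarith
  · have hend : (t - (κ * (2 * t - 1) - t) + 1) * (t + 3 * (κ * (2 * t - 1) - t) - 2) =
        κ * t ^ 2 + (17 * κ - 10) * t - (3 * κ ^ 2 + 5 * κ + 2) := by
      linear_combination (t ^ 2 - t) * hq
    rw [hend]
    have : (17 * κ - 10) * 2 ≤ (17 * κ - 10) * t :=
      mul_le_mul_of_nonneg_left ht (by linarith)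
    nlinarith

variable [DecidableEq α] {F : Finset (Finset α)} {A : Finset α} {t : ℕ}

theorem IsCoverFree.coverFreeRate_mul_sq_sub_one_le_card_ownPairs (hF : IsCoverFree t F)
    (ht : 2 ≤ t) (hAF : A ∈ F) (hA : A ⊆ (F.erase A).sup id) (hcard : #A ≤ κ * (2 * t - 1)) :
    κ * t ^ 2 - 1 ≤ 2 * #(ownPairs F A) := by
  have htR : (2 : ℝ) ≤ t := by exact_mod_cast ht
  have hcard' : (#A : ℝ) ≤ 2 * t := by nlinarith [coverFreeRate_mem_Ioo.2]
  obtain ⟨j, hj, hjA, hown⟩ := hF.exists_le_two_mul_card_ownPairs hAF hA (by exact_mod_cast hcard')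
  have hjR : (1 : ℝ) ≤ j := by exact_mod_cast hj
  have hjAR : (t + j : ℝ) ≤ #A := by exact_mod_cast hjA
  exact (coverFreeRate_mul_sq_sub_one_le htR hjR (hjAR.trans hcard)).trans hown

theorem le_card_sup_of_le_card_ownPairs {b : ℝ} (hFcard : #(F.sup id) < #F) (hb : 1 < b)
    (hown : ∀ A ∈ F, b - 1 ≤ 2 * #(ownPairs F A)) : b ≤ #(F.sup id) := by
  set n := #(F.sup id)
  have hsum : (#F : ℝ) * (b - 1) ≤ n * (n - 1) := by
    calc (#F : ℝ) * (b - 1) ≤ ∑ A ∈ F, 2 * (#(ownPairs F A) : ℝ) := by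
          rw [← nsmul_eq_mul]
          exact card_nsmul_le_sum _ _ _ hown
      _ = 2 * (∑ A ∈ F, #(ownPairs F A) : ℕ) := by rw [← mul_sum, Nat.cast_sum]
      _ ≤ 2 * (n.choose 2 : ℕ) := by gcongr; exact sum_card_ownPairs_le F
      _ = n * (n - 1) := by rw [Nat.cast_choose_two]; ring
  have hn : (n : ℝ) + 1 ≤ #F := by exact_mod_cast hFcard
  by_contra! hlt
  have : (n + 1) * (b - 1) ≤ n * (n - 1) :=
    (mul_le_mul_of_nonneg_right hn (by linarith)).trans hsum
  rcases Nat.eq_zero_or_pos n with hn0 | hnpos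
  · rw [hn0] at this
    norm_num at this
    linarith
  · have : (1 : ℝ) ≤ n := by exact_mod_cast hnpos
    nlinarith

theorem stmt_16_general (hF : IsCoverFree t F) (hcard : #(F.sup id) < #F) :
    κ * t ^ 2 ≤ #(F.sup id) := by
  induction t generalizing F with
  | zero => simp
  | succ t ih =>
    obtain ⟨F', hF'F, hcard', hshared⟩ := exists_subset_without_private_points hcard
    refine le_trans ?_ (Nat.cast_le.2 (card_le_card (sup_mono (f := id) hF'F)))
    replace hF := hF.mono hF'F
    clear hcard hF'F F
    obtain ⟨hlb, hub⟩ := coverFreeRate_mem_Ioo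
    rcases Nat.eq_zero_or_pos t with rfl | ht
    · have := hF.card_sup_pos (card_pos.1 (by omega))
      have : (1 : ℝ) ≤ #(F'.sup id) := by exact_mod_cast this
      norm_num
      linarith
    by_cases hsmall : ∀ A ∈ F', #A ≤ κ * (2 * (t + 1 : ℕ) - 1)
    · have htR : (1 : ℝ) ≤ t := by exact_mod_cast ht
      refine le_card_sup_of_le_card_ownPairs hcard' ?_ fun A hA =>
        hF.coverFreeRate_mul_sq_sub_one_le_card_ownPairs (by omega) hA (hshared A hA) (hsmall A hA)
      push_cast
      nlinarith
    · push Not at hsmall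
      obtain ⟨A, hA, hlarge⟩ := hsmall
      have hpos := card_pos.2 (hF.nonempty hA)
      have hsup := card_sup_image_sdiff_add_card_le hA
      have hF'' := card_image_of_injOn (hF.injOn_sdiff (by omega) hA)
      rw [card_erase_of_mem hA] at hF''
      have hrec := ih (hF.image_sdiff hA) (by omega)
      have hsupR : (#(((F'.erase A).image (· \ A)).sup id) : ℝ) + #A ≤ #(F'.sup id) := by
        exact_mod_cast hsup
      push_cast at hlarge ⊢
      linarith

end Bound

/-- For every positive integer `t`, every `t`-cover-free family of more than `N`
subsets of an `N`-element set satisfies `N ≥ ((15+√33)/24)·t²`. -/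
theorem stmt_16 (t N : ℕ) (ht : 1 ≤ t) (F : Finset (Finset (Fin N)))
    (hF : IsCoverFree t F) (hcard : N < F.card) :
    (15 + Real.sqrt 33) / 24 * (t : ℝ) ^ 2 ≤ (N : ℝ) := by
  have hsup : #(F.sup id) ≤ N := card_finset_fin_le _
  exact (stmt_16_general hF (hsup.trans_lt hcard)).trans (by exact_mod_cast hsup)
end

section
/- For every positive integer N there exists a constant c (depending only on N) such that for every alphabet size q, every q-ary 2-traceability code of length N has at most c·q^⌈N/4⌉ codewords; that is, M_TA(N,q,2) ≤ c·q^⌈N/4⌉. -/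
/-!
Call `T` a kernel of the code at `y` if codewords agreeing with `y` exactly on `T` can be chosen
to differ from any given word everywhere off `T`. Two kernels `A`, `B` at a codeword `y` with
`#(A ∪ B)ᶜ ≤ #(A \ B) + #(B \ A)` contradict 2-traceability: there are codewords `c`, `e` agreeing
with `y` exactly on `A`, respectively `B`, and with each other only on `A ∩ B`; a descendant of
`{c, e}` that equals `y` on `A ∪ B` and balances `c` against `e` elsewhere is at least as close to
`y` as to `c` and to `e`. If every set of `⌈N/4⌉` coordinates were contained in a kernel at `y`,
then a kernel `A` of maximal size and a kernel `B` covering `⌈N/4⌉` coordinates of `Aᶜ` (or all of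
them) would be such a pair. So every codeword has a set `S` of `⌈N/4⌉` coordinates contained in no
kernel. For fixed `S`, boundedly many of these codewords share their restriction to `S`, since
many codewords agreeing on `S` contain a large sunflower, whose core is a kernel containing `S`.
-/

open Finset

section Sunflower

theorem exists_subset_const_or_injOn {β γ : Type*} (f : β → γ) {s : Finset β} {m n : ℕ}
    (hs : m * n < #s) :
    ∃ t ⊆ s, (m < #t ∧ ∃ v, ∀ x ∈ t, f x = v) ∨ (n < #t ∧ Set.InjOn f t) := by
  classical
  by_cases hfib : ∃ v, m < #{x ∈ s | f x = v}
  · obtain ⟨v, hv⟩ := hfib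
    exact ⟨_, filter_subset _ _, .inl ⟨hv, v, fun x hx => (mem_filter.1 hx).2⟩⟩
  · push Not at hfib
    have himage : n < #(s.image f) :=
      lt_of_mul_lt_mul_left' (hs.trans_le (card_le_mul_card_image s m fun v _ => hfib v))
    obtain ⟨t, hts, hinj, htimage⟩ := exists_subset_injOn_image_eq_of_surjOn (f := f) s
      (s.image f) (by simpa only [coe_image] using Set.surjOn_image f s)
    exact ⟨t, hts, .inr ⟨by rwa [← card_image_of_injOn hinj, htimage], hinj⟩⟩

/-- The threshold squares for each function because a fibre and a transversal of its fibres cannot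
both be small. -/
theorem exists_subset_forall_const_or_injOn {ι β : Type*} {γ : ι → Type*} (f : ∀ i, β → γ i)
    (I : Finset ι) {s : Finset β} {L : ℕ} (hs : L ^ 2 ^ #I < #s) :
    ∃ t ⊆ s, L < #t ∧ ∀ i ∈ I, (∃ v, ∀ x ∈ t, f i x = v) ∨ Set.InjOn (f i) t := by
  classical
  induction I using Finset.induction_on generalizing s with
  | empty => exact ⟨s, Subset.rfl, by simpa using hs, by simp⟩
  | insert i I hi ih =>
    rw [card_insert_of_notMem hi, pow_succ, mul_two, pow_add] at hs
    obtain ⟨u, hus, hu⟩ := exists_subset_const_or_injOn (f i) hs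
    obtain ⟨t, htu, hLt, ht⟩ := ih (hu.elim And.left And.left)
    refine ⟨t, htu.trans hus, hLt, forall_mem_insert _ _ _ |>.2 ⟨?_, ht⟩⟩
    exact hu.imp (fun ⟨_, v, hv⟩ => ⟨v, fun x hx => hv x (htu hx)⟩) fun h => h.2.mono htu

end Sunflower

section Kernel

variable {ι : Type*} {α : ι → Type*} {C D : Finset (∀ i, α i)} {y : ∀ i, α i}
  {S T : Finset ι}

/-- `T` is a kernel of the code `C` at the word `y`: codewords other than `y` agree with `y`
exactly on `T`, and can be chosen to avoid any prescribed word `z` off `T`. The core of a sunflower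
in `C` through `y` with enough petals is such a set. -/
def IsKernelAt (C : Finset (∀ i, α i)) (y : ∀ i, α i) (T : Finset ι) : Prop :=
  ∀ z : ∀ i, α i, ∃ c ∈ C, c ≠ y ∧ (∀ i, c i = y i ↔ i ∈ T) ∧ ∀ i ∉ T, c i ≠ z i

theorem IsKernelAt.mono (h : IsKernelAt C y T) (hCD : C ⊆ D) : IsKernelAt D y T := fun z =>
  let ⟨c, hc, hcz⟩ := h z
  ⟨c, hCD hc, hcz⟩

variable [Fintype ι]

theorem isKernelAt_of_injOn_eval [DecidableEq ι] (hy : y ∈ C) (hcard : #Tᶜ + 1 < #C)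
    (hconst : ∀ i ∈ T, ∀ c ∈ C, c i = y i)
    (hinj : ∀ i ∉ T, Set.InjOn (Function.eval i) (C : Set (∀ i, α i))) :
    IsKernelAt C y T := by
  classical
  intro z
  let hit : Finset (∀ i, α i) := Tᶜ.biUnion fun i => {c ∈ C | c i = z i}
  have hhit : #hit < #(C.erase y) := by
    have hle : #hit ≤ #Tᶜ * 1 := card_biUnion_le_card_mul _ _ _ fun i hi =>
      card_le_one.2 fun c hc e he => by
        rw [mem_filter] at hc he
        exact hinj i (mem_compl.1 hi) hc.1 he.1 (hc.2.trans he.2.symm)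
    rw [card_erase_of_mem hy]
    omega
  obtain ⟨c, hc, hcz⟩ := exists_mem_notMem_of_card_lt_card hhit
  obtain ⟨hcy, hcC⟩ := mem_erase.1 hc
  refine ⟨c, hcC, hcy, fun i => ⟨fun hi => ?_, fun hi => hconst i hi c hcC⟩, fun i hi hiz => ?_⟩
  · by_contra hiT
    exact hcy (hinj i hiT hcC hy hi)
  · exact hcz (mem_biUnion.2 ⟨i, mem_compl.2 hi, mem_filter.2 ⟨hcC, hiz⟩⟩)

theorem exists_isKernelAt_of_lt_card (hS : ∀ i ∈ S, ∀ c ∈ D, ∀ e ∈ D, c i = e i)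
    (hcard : (Fintype.card ι + 1) ^ 2 ^ Fintype.card ι < #D) :
    ∃ y ∈ D, ∃ T, S ⊆ T ∧ IsKernelAt D y T := by
  classical
  obtain ⟨G, hGD, hG, hsplit⟩ :=
    exists_subset_forall_const_or_injOn (fun i (c : ∀ i, α i) => c i) univ hcard
  obtain ⟨y, hy⟩ : G.Nonempty := card_pos.1 (by omega)
  obtain ⟨T, hT⟩ : ∃ T : Finset ι, ∀ i, i ∈ T ↔ ∀ c ∈ G, c i = y i :=
    ⟨({i | ∀ c ∈ G, c i = y i} : Finset ι), fun i => mem_filter_univ i⟩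
  have hTc : #Tᶜ ≤ Fintype.card ι := card_le_univ _
  refine ⟨y, hGD hy, T, fun i hi => ?_, ?_⟩
  · exact (hT i).2 fun c hc => hS i hi c (hGD hc) y (hGD hy)
  · refine (isKernelAt_of_injOn_eval hy (by omega) (fun i hi => (hT i).1 hi)
      fun i hi => (hsplit i (mem_univ i)).resolve_left ?_).mono hGD
    rintro ⟨v, hv⟩
    exact hi ((hT i).2 fun c hc => (hv c hc).trans (hv y hy).symm)

theorem card_le_of_forall_not_isKernelAt [∀ i, Fintype (α i)] (hDC : D ⊆ C)
    (hD : ∀ y ∈ D, ∀ T, S ⊆ T → ¬ IsKernelAt C y T) :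
    #D ≤ (Fintype.card ι + 1) ^ 2 ^ Fintype.card ι * ∏ i ∈ S, Fintype.card (α i) := by
  classical
  calc #D ≤ (Fintype.card ι + 1) ^ 2 ^ Fintype.card ι * #(D.image S.restrict) := by
        refine card_le_mul_card_image D _ fun v _ => ?_
        by_contra! hlt
        obtain ⟨y, hy, T, hST, hT⟩ := exists_isKernelAt_of_lt_card (fun i hi c hc e he =>
          congrFun ((mem_filter.1 hc).2.trans (mem_filter.1 he).2.symm) ⟨i, hi⟩) hlt
        exact hD y (mem_filter.1 hy).1 T hST (hT.mono ((filter_subset _ _).trans hDC))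
    _ ≤ (Fintype.card ι + 1) ^ 2 ^ Fintype.card ι * ∏ i ∈ S, Fintype.card (α i) := by
        gcongr
        refine (card_le_univ _).trans_eq ?_
        rw [Fintype.card_pi, prod_coe_sort S fun i => Fintype.card (α i)]

end Kernel

section Confusion

variable {ι : Type*} [Fintype ι] {α : ι → Type*} [∀ i, DecidableEq (α i)]
  {C : Finset (∀ i, α i)} {x y c e : ∀ i, α i} {s A B : Finset ι}

theorem hammingDist_le_card (h : ∀ i ∉ s, x i = y i) : hammingDist x y ≤ #s :=
  card_le_card fun i hi => by_contra fun his => (mem_filter.1 hi).2 (h i his)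

theorem card_le_hammingDist (h : ∀ i ∈ s, x i ≠ y i) : #s ≤ hammingDist x y :=
  card_le_card fun i hi => mem_filter.2 ⟨mem_univ i, h i hi⟩

variable [DecidableEq ι]

theorem exists_mix_hammingDist_le (hcA : ∀ i ∈ A, c i = y i) (heB : ∀ i ∈ B, e i = y i)
    (hce : ∀ i, c i = e i → i ∈ A ∩ B) (hAB : #(A ∪ B)ᶜ ≤ #(A \ B) + #(B \ A)) :
    ∃ x : ∀ i, α i, (∀ i, x i = c i ∨ x i = e i) ∧
      hammingDist x y ≤ hammingDist x c ∧ hammingDist x y ≤ hammingDist x e := by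
  -- Following `c` on `R` and `e` on the rest of `(A ∪ B)ᶜ` adds `#R` mismatches with `e` to those
  -- on `A \ B`, and `#(A ∪ B)ᶜ - #R` mismatches with `c` to those on `B \ A`.
  obtain ⟨R, hR, hRcard⟩ := exists_subset_card_eq (min_le_left #(A ∪ B)ᶜ #(B \ A))
  have hRA : Disjoint A R := disjoint_right.2 fun i hi hiA =>
    mem_compl.1 (hR hi) (mem_union_left B hiA)
  have hRB : Disjoint R B := disjoint_left.2 fun i hi hiB =>
    mem_compl.1 (hR hi) (mem_union_right A hiB)
  let x := (A ∪ R).piecewise c e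
  have hxc_eq : ∀ i ∈ A ∪ R, x i = c i := fun i => piecewise_eq_of_mem _ _ _
  have hxe_eq : ∀ i ∉ A ∪ R, x i = e i := fun i => piecewise_eq_of_notMem _ _ _
  have hxy : hammingDist x y ≤ #(A ∪ B)ᶜ := hammingDist_le_card fun i hi => by
    rw [notMem_compl, mem_union] at hi
    by_cases hiAR : i ∈ A ∪ R
    · have hiA : i ∈ A := hi.elim id fun hiB =>
        (mem_union.1 hiAR).resolve_right (disjoint_right.1 hRB hiB)
      rw [hxc_eq i hiAR, hcA i hiA]
    · rw [hxe_eq i hiAR, heB i (hi.resolve_left fun hiA => hiAR (mem_union_left R hiA))]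
  have hxc : #(A ∪ R)ᶜ ≤ hammingDist x c := card_le_hammingDist fun i hi hxi => by
    rw [mem_compl] at hi
    exact hi (mem_union_left R (mem_inter.1 (hce i (hxi.symm.trans (hxe_eq i hi)))).1)
  have hxe : #((A ∪ R) \ B) ≤ hammingDist x e := card_le_hammingDist fun i hi hxi => by
    rw [mem_sdiff] at hi
    exact hi.2 (mem_inter.1 (hce i ((hxc_eq i hi.1).symm.trans hxi))).2
  have hAR : #(A ∪ R) = #A + #R := card_union_of_disjoint hRA
  have hARB : #((A ∪ R) \ B) = #(A \ B) + #R := by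
    rw [union_sdiff_distrib, sdiff_eq_self_of_disjoint hRB,
      card_union_of_disjoint (disjoint_of_subset_left sdiff_subset hRA)]
  have hABcard : #(B \ A) + #A = #(A ∪ B) := by rw [card_sdiff_add_card, union_comm]
  have hARcompl := card_add_card_compl (A ∪ R)
  have hABcompl := card_add_card_compl (A ∪ B)
  exact ⟨x, fun i => (em (i ∈ A ∪ R)).imp (hxc_eq i) (hxe_eq i), by omega, by omega⟩

theorem IsKernelAt.exists_pair_mix_hammingDist_le (hA : IsKernelAt C y A) (hB : IsKernelAt C y B)
    (hAB : #(A ∪ B)ᶜ ≤ #(A \ B) + #(B \ A)) :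
    ∃ c ∈ C, ∃ e ∈ C, c ≠ y ∧ e ≠ y ∧ ∃ x : ∀ i, α i, (∀ i, x i = c i ∨ x i = e i) ∧
      hammingDist x y ≤ hammingDist x c ∧ hammingDist x y ≤ hammingDist x e := by
  obtain ⟨c, hc, hcy, hcA, -⟩ := hA y
  obtain ⟨e, he, hey, heB, hec⟩ := hB c
  have hce : ∀ i, c i = e i → i ∈ A ∩ B := fun i hi => by
    have hiB : i ∈ B := by_contra fun hiB => hec i hiB hi.symm
    exact mem_inter.2 ⟨(hcA i).1 (hi.trans ((heB i).2 hiB)), hiB⟩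
  exact ⟨c, hc, e, he, hcy, hey, exists_mix_hammingDist_le (fun i => (hcA i).2)
    (fun i => (heB i).2) hce hAB⟩

end Confusion

theorem exists_card_compl_union_le_card_sdiff_add {ι : Type*} [Fintype ι] [DecidableEq ι]
    {P : Finset ι → Prop} {m : ℕ} (hm : m ≤ Fintype.card ι) (hm4 : Fintype.card ι ≤ 4 * m)
    (hP : ∀ S, #S = m → ∃ T, S ⊆ T ∧ P T) :
    ∃ A B, P A ∧ P B ∧ #(A ∪ B)ᶜ ≤ #(A \ B) + #(B \ A) := by
  obtain ⟨S₀, -, hS₀⟩ := exists_subset_card_eq (s := (univ : Finset ι)) hm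
  obtain ⟨T₀, hST₀, hT₀⟩ := hP S₀ hS₀
  obtain ⟨A, hA, hmax⟩ := Set.exists_max_image {T | P T} card (Set.toFinite _) ⟨T₀, hT₀⟩
  have hmA : m ≤ #A := hS₀ ▸ (card_le_card hST₀).trans (hmax T₀ hT₀)
  obtain ⟨S, hSm, hSA⟩ : ∃ S, #S = m ∧ min m #Aᶜ ≤ #(S \ A) := by
    rcases le_total m #Aᶜ with hle | hle
    · obtain ⟨S, hS, hSm⟩ := exists_subset_card_eq hle
      have hdisj : Disjoint S A := disjoint_left.2 fun i hi => mem_compl.1 (hS hi)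
      exact ⟨S, hSm, by rw [sdiff_eq_self_of_disjoint hdisj, hSm]; exact min_le_left _ _⟩
    · obtain ⟨S, hS, -, hSm⟩ := exists_subsuperset_card_eq (subset_univ Aᶜ) hle hm
      refine ⟨S, hSm, (min_le_right _ _).trans (card_le_card fun i hi => ?_)⟩
      exact mem_sdiff.2 ⟨hS hi, mem_compl.1 hi⟩
  obtain ⟨B, hSB, hB⟩ := hP S hSm
  refine ⟨A, B, hA, hB, ?_⟩
  have hBA : min m #Aᶜ ≤ #(B \ A) := hSA.trans (card_le_card (sdiff_subset_sdiff hSB Subset.rfl))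
  have hsdiff : #(B \ A) ≤ #(A \ B) := card_sdiff_le_card_sdiff_iff.2 (hmax B hB)
  have hABcard : #(B \ A) + #A = #(A ∪ B) := by rw [card_sdiff_add_card, union_comm]
  have hAcompl := card_add_card_compl A
  have hABcompl := card_add_card_compl (A ∪ B)
  omega

namespace IsTA

variable {N q m : ℕ} {C : Finset (Fin N → Fin q)} {x y c e : Fin N → Fin q}

theorem hammingDist_lt_or_lt (hC : IsTA 2 C) (hc : c ∈ C) (he : e ∈ C) (hy : y ∈ C) (hcy : c ≠ y)
    (hey : e ≠ y) (hx : ∀ i, x i = c i ∨ x i = e i) :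
    hammingDist x c < hammingDist x y ∨ hammingDist x e < hammingDist x y := by
  obtain ⟨w, hw, hlt⟩ := hC {c, e} (insert_subset hc (singleton_subset_iff.2 he)) card_le_two x
    fun i => by simpa only [mem_insert, mem_singleton, exists_eq_or_imp, exists_eq_left] using hx i
  have hwy := hlt y (by simp [hy, hcy.symm, hey.symm])
  rcases mem_insert.1 hw with rfl | hw
  · exact .inl hwy
  · exact .inr (mem_singleton.1 hw ▸ hwy)

theorem exists_card_eq_forall_not_isKernelAt (hC : IsTA 2 C) (hy : y ∈ C) (hm : m ≤ N)
    (hm4 : N ≤ 4 * m) :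
    ∃ S : Finset (Fin N), #S = m ∧ ∀ T, S ⊆ T → ¬ IsKernelAt C y T := by
  by_contra! hcover
  obtain ⟨A, B, hA, hB, hAB⟩ := exists_card_compl_union_le_card_sdiff_add
    (by rwa [Fintype.card_fin]) (by rwa [Fintype.card_fin]) hcover
  obtain ⟨c, hc, e, he, hcy, hey, x, hx, hxc, hxe⟩ := hA.exists_pair_mix_hammingDist_le hB hAB
  rcases hC.hammingDist_lt_or_lt hc he hy hcy hey hx with hlt | hlt
  · exact hxc.not_gt hlt
  · exact hxe.not_gt hlt

theorem card_le (hC : IsTA 2 C) (hm : m ≤ N) (hm4 : N ≤ 4 * m) :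
    #C ≤ N.choose m * (N + 1) ^ 2 ^ N * q ^ m := by
  classical
  let uncovered (S : Finset (Fin N)) : Finset (Fin N → Fin q) :=
    {y ∈ C | ∀ T, S ⊆ T → ¬ IsKernelAt C y T}
  have hcover : C ⊆ (powersetCard m univ).biUnion uncovered := fun y hy => by
    obtain ⟨S, hSm, hS⟩ := hC.exists_card_eq_forall_not_isKernelAt hy hm hm4
    exact mem_biUnion.2 ⟨S, mem_powersetCard_univ.2 hSm, mem_filter.2 ⟨hy, hS⟩⟩
  have huncovered : ∀ S ∈ powersetCard m univ, #(uncovered S) ≤ (N + 1) ^ 2 ^ N * q ^ m := by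
    intro S hS
    have hle := card_le_of_forall_not_isKernelAt (filter_subset _ _)
      fun y (hy : y ∈ uncovered S) => (mem_filter.1 hy).2
    simpa only [Fintype.card_fin, prod_const, mem_powersetCard_univ.1 hS] using hle
  calc #C ≤ #((powersetCard m univ).biUnion uncovered) := card_le_card hcover
    _ ≤ #(powersetCard m (univ : Finset (Fin N))) * ((N + 1) ^ 2 ^ N * q ^ m) :=
      card_biUnion_le_card_mul _ _ _ huncovered
    _ = N.choose m * (N + 1) ^ 2 ^ N * q ^ m := by rw [card_powersetCard, card_fin, mul_assoc]

end IsTA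

/-- For every positive integer `N` there is a constant `c` (depending only on `N`)
such that for every alphabet size `q`, every `q`-ary 2-traceability code of length
`N` has at most `c·q^⌈N/4⌉` codewords. -/
theorem stmt_17 (N : ℕ) (hN : 1 ≤ N) :
    ∃ c : ℕ, ∀ q : ℕ, ∀ C : Finset (Fin N → Fin q),
      IsTA 2 C → C.card ≤ c * q ^ (N ⌈/⌉ 4) := by
  have hm4 : N ≤ 4 * (N ⌈/⌉ 4) := (ceilDiv_le_iff_le_mul four_pos).1 le_rfl
  have hm : N ⌈/⌉ 4 ≤ N := (ceilDiv_le_iff_le_mul four_pos).2 (by omega)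
  exact ⟨N.choose (N ⌈/⌉ 4) * (N + 1) ^ 2 ^ N, fun q C hC => hC.card_le hm hm4⟩
end
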